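/- arXiv:math/0410104 — 3 statements merged into one kernel-verified Lean document; each statement's English description precedes it below -/
import Mathlib

section
/- Let {X_i : i ∈ 𝒥} satisfy condition (LD3) and for each i let ξ_i be a measurable function of X_i with E ξ_i = 0 and E ξ_i⁴ < ∞. Let T = Σ_{i∈𝒥} ξ_i, σ² = E T², and κ₁ = max_{i∈𝒥} max(|C_i|, |{j ∈ 𝒥 : i ∈ C_j}|). Then σ² ≤ κ₁ Σ_{i∈𝒥} E ξ_i² and E T⁴ ≤ 3σ⁴ + 22 κ₁³ Σ_{i∈𝒥} E ξ_i⁴. -/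
open MeasureTheory ProbabilityTheory Real

/-! Write `T_S = ∑ j ∈ S, ξ j`. Since `E T⁴ = ∑ i, E ξᵢ T³`, one splits off from each of the three
factors `T` a local sum: `ξᵢ` is independent of `T - T_{Aᵢ}`, the pair `(ξᵢ, T_{Aᵢ})` of
`T - T_{Bᵢ}`, and the triple `(ξᵢ, T_{Aᵢ}, T_{Bᵢ})` of `T - T_{Cᵢ}`. This gives `E ξᵢ T³` as
`3 E[ξᵢ T] E[T²]`, which sums to `3 σ⁴`, plus `6 + 3 + 6 + 3 + 3 + 1 = 22` terms which by Hölder's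
and Minkowski's inequalities are each at most `aᵢ (∑ j ∈ Cᵢ, aⱼ)³`, where `aⱼ` is the `L⁴` norm of
`ξⱼ`. Summation over `i` loses only the factor `κ³`, because both the neighbourhoods `Cᵢ` and the
transposed ones have at most `κ` elements. -/

section Counting

open scoped Finset

lemma mul_pow_le_pow_add_mul_pow {R : Type*} [CommRing R] [LinearOrder R] [IsStrictOrderedRing R]
    {x y : R} (hx : 0 ≤ x) (hy : 0 ≤ y) (n : ℕ) :
    (n + 1) * (x * y ^ n) ≤ x ^ (n + 1) + n * y ^ (n + 1) := by
  have tangent := pow_add_mul_le_add_pow hy (b := x - y) (by linarith) (n + 1)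
  rw [add_sub_cancel, Nat.add_sub_cancel] at tangent
  push_cast at tangent
  linear_combination tangent

variable {ι : Type*} [Fintype ι] [DecidableEq ι] {C : ι → Finset ι} {κ : ℕ} {a : ι → ℝ}

lemma sum_sum_le_of_card_filter_mem_le (hC : ∀ j, #{i | j ∈ C i} ≤ κ) (ha : ∀ i, 0 ≤ a i) :
    ∑ i, ∑ j ∈ C i, a j ≤ κ * ∑ j, a j := by
  calc ∑ i, ∑ j ∈ C i, a j
      = ∑ j, ∑ i with j ∈ C i, a j := Finset.sum_comm' (by simp)
    _ = ∑ j, (#{i | j ∈ C i} : ℝ) * a j := by simp only [Finset.sum_const, nsmul_eq_mul]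
    _ ≤ κ * ∑ j, a j := by
        rw [Finset.mul_sum]
        gcongr with j
        · exact ha j
        · exact hC j

lemma sum_mul_sum_pow_succ_le (hC : ∀ i, #(C i) ≤ κ) (hC' : ∀ j, #{i | j ∈ C i} ≤ κ)
    (ha : ∀ i, 0 ≤ a i) (n : ℕ) :
    ∑ i, a i * ∑ j ∈ C i, a j ^ (n + 1) ≤ κ * ∑ i, a i ^ (n + 2) := by
  have young (i j : ι) :
      (n + 2) * (a i * a j ^ (n + 1)) ≤ a i ^ (n + 2) + (n + 1) * a j ^ (n + 2) := by
    have := mul_pow_le_pow_add_mul_pow (ha i) (ha j) (n + 1)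
    push_cast at this
    linarith
  have young_sum (i : ι) : (n + 2) * (a i * ∑ j ∈ C i, a j ^ (n + 1)) ≤
      κ * a i ^ (n + 2) + (n + 1) * ∑ j ∈ C i, a j ^ (n + 2) := by
    calc (n + 2) * (a i * ∑ j ∈ C i, a j ^ (n + 1))
        = ∑ j ∈ C i, (n + 2) * (a i * a j ^ (n + 1)) := by simp only [Finset.mul_sum]
      _ ≤ ∑ j ∈ C i, (a i ^ (n + 2) + (n + 1) * a j ^ (n + 2)) :=
          Finset.sum_le_sum fun j _ => young i j
      _ = #(C i) * a i ^ (n + 2) + (n + 1) * ∑ j ∈ C i, a j ^ (n + 2) := by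
          rw [Finset.sum_add_distrib, Finset.sum_const, nsmul_eq_mul, Finset.mul_sum]
      _ ≤ _ := by
          gcongr
          · exact pow_nonneg (ha i) _
          · exact hC i
  have hsum := Finset.sum_le_sum fun i (_ : i ∈ Finset.univ) => young_sum i
  rw [← Finset.mul_sum, Finset.sum_add_distrib, ← Finset.mul_sum, ← Finset.mul_sum] at hsum
  have hcount := sum_sum_le_of_card_filter_mem_le hC' fun i => pow_nonneg (ha i) (n + 2)
  refine le_of_mul_le_mul_left (a := (n + 2 : ℝ)) ?_ (by positivity)
  linear_combination hsum + (n + 1 : ℝ) * hcount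

lemma sum_mul_sum_pow_le (hC : ∀ i, #(C i) ≤ κ) (hC' : ∀ j, #{i | j ∈ C i} ≤ κ)
    (ha : ∀ i, 0 ≤ a i) (n : ℕ) :
    ∑ i, a i * (∑ j ∈ C i, a j) ^ (n + 1) ≤ κ ^ (n + 1) * ∑ i, a i ^ (n + 2) := by
  have jensen (i : ι) :
      (∑ j ∈ C i, a j) ^ (n + 1) ≤ (κ : ℝ) ^ n * ∑ j ∈ C i, a j ^ (n + 1) := by
    have hsum : 0 ≤ ∑ j ∈ C i, a j ^ (n + 1) := Finset.sum_nonneg fun j _ => pow_nonneg (ha j) _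
    refine (pow_sum_le_card_mul_sum_pow (fun j _ => ha j) n).trans ?_
    gcongr
    exact hC i
  calc ∑ i, a i * (∑ j ∈ C i, a j) ^ (n + 1)
      ≤ ∑ i, a i * (κ ^ n * ∑ j ∈ C i, a j ^ (n + 1)) :=
        Finset.sum_le_sum fun i _ => mul_le_mul_of_nonneg_left (jensen i) (ha i)
    _ = κ ^ n * ∑ i, a i * ∑ j ∈ C i, a j ^ (n + 1) := by
        rw [Finset.mul_sum]
        exact Finset.sum_congr rfl fun i _ => by ring
    _ ≤ κ ^ n * (κ * ∑ i, a i ^ (n + 2)) := by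
        gcongr
        exact sum_mul_sum_pow_succ_le hC hC' ha n
    _ = κ ^ (n + 1) * ∑ i, a i ^ (n + 2) := by ring

end Counting

section LpNorm

open scoped Finset ENNReal

variable {α : Type*} [MeasurableSpace α] {μ : Measure α}

lemma lpNorm_pow_eq_integral_pow {n : ℕ} (hn : Even n) (hn₀ : n ≠ 0) {f : α → ℝ}
    (hf : AEStronglyMeasurable f μ) : lpNorm f n μ ^ n = ∫ x, f x ^ n ∂μ := by
  have hint : 0 ≤ ∫ x, f x ^ n ∂μ := integral_nonneg fun x => hn.pow_nonneg _
  rw [lpNorm_eq_integral_norm_rpow_toReal (by simpa) (ENNReal.natCast_ne_top n) hf]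
  simp only [ENNReal.toReal_natCast, rpow_natCast, norm_eq_abs, hn.pow_abs]
  exact rpow_inv_natCast_pow hint hn₀

lemma memLp_natCast_iff_integrable_pow {n : ℕ} (hn : Even n) (hn₀ : n ≠ 0) {f : α → ℝ}
    (hf : AEStronglyMeasurable f μ) : MemLp f n μ ↔ Integrable (fun x => f x ^ n) μ := by
  rw [← integrable_norm_rpow_iff hf (by simpa) (ENNReal.natCast_ne_top n)]
  simp only [ENNReal.toReal_natCast, rpow_natCast, norm_eq_abs, hn.pow_abs]

variable [IsProbabilityMeasure μ]

lemma lintegral_prod_enorm_le_prod_eLpNorm {E ι : Type*} [NormedAddCommGroup E] {s : Finset ι}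
    {p : ℝ≥0∞} (hs : #s ≤ p) {f : ι → α → E} (hf : ∀ i ∈ s, AEStronglyMeasurable (f i) μ) :
    ∫⁻ x, ∏ i ∈ s, ‖f i x‖ₑ ∂μ ≤ ∏ i ∈ s, eLpNorm (f i) p μ := by
  obtain rfl | hne := s.eq_empty_or_nonempty
  · simp
  have hcard : (#s : ℝ) ≠ 0 := by simpa using hne.ne_empty
  calc ∫⁻ x, ∏ i ∈ s, ‖f i x‖ₑ ∂μ
      = ∫⁻ x, ∏ i ∈ s, (‖f i x‖ₑ ^ (#s : ℝ)) ^ (#s : ℝ)⁻¹ ∂μ := by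
        simp only [ENNReal.rpow_rpow_inv hcard]
    _ ≤ ∏ i ∈ s, (∫⁻ x, ‖f i x‖ₑ ^ (#s : ℝ) ∂μ) ^ (#s : ℝ)⁻¹ :=
        ENNReal.lintegral_prod_norm_pow_le s (fun i hi => (hf i hi).enorm.pow_const _)
          (by simp [hcard]) fun _ _ => by positivity
    _ = ∏ i ∈ s, eLpNorm (f i) #s μ := by
        refine Finset.prod_congr rfl fun i _ => ?_
        rw [eLpNorm_eq_lintegral_rpow_enorm_toReal (by simpa using hcard)
          (ENNReal.natCast_ne_top _), ENNReal.toReal_natCast, one_div]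
    _ ≤ ∏ i ∈ s, eLpNorm (f i) p μ :=
        Finset.prod_le_prod' fun i hi => eLpNorm_le_eLpNorm_of_exponent_le hs (hf i hi)

variable {𝕜 ι : Type*} [NormedField 𝕜] {s : Finset ι} {p : ℝ≥0∞} {f : ι → α → 𝕜}

lemma integrable_prod_of_card_le (hs : #s ≤ p) (hf : ∀ i ∈ s, MemLp (f i) p μ) :
    Integrable (∏ i ∈ s, f i) μ := by
  have hprod : MemLp (∏ i ∈ s, f i) (∑ _i ∈ s, (#s : ℝ≥0∞)⁻¹)⁻¹ μ :=
    MemLp.prod fun i hi => (hf i hi).mono_exponent hs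
  refine memLp_one_iff_integrable.1 (hprod.mono_exponent ?_)
  rw [Finset.sum_const, nsmul_eq_mul, ENNReal.one_le_inv]
  exact ENNReal.mul_inv_le_one _

lemma norm_integral_prod_le_prod_lpNorm [NormedSpace ℝ 𝕜] (hs : #s ≤ p)
    (hf : ∀ i ∈ s, MemLp (f i) p μ) :
    ‖∫ x, (∏ i ∈ s, f i) x ∂μ‖ ≤ ∏ i ∈ s, lpNorm (f i) p μ := by
  have hmeas (i : ι) (hi : i ∈ s) : AEStronglyMeasurable (f i) μ := (hf i hi).aestronglyMeasurable
  rw [← ENNReal.ofReal_le_ofReal_iff (Finset.prod_nonneg fun _ _ => lpNorm_nonneg), ofReal_norm,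
    ENNReal.ofReal_prod_of_nonneg fun _ _ => lpNorm_nonneg,
    Finset.prod_congr rfl fun i hi => ofReal_lpNorm (hf i hi)]
  calc ‖∫ x, (∏ i ∈ s, f i) x ∂μ‖ₑ
      ≤ ∫⁻ x, ‖(∏ i ∈ s, f i) x‖ₑ ∂μ := enorm_integral_le_lintegral_enorm _
    _ = ∫⁻ x, ∏ i ∈ s, ‖f i x‖ₑ ∂μ := by
        simp only [Finset.prod_apply, enorm_eq_nnnorm, nnnorm_prod, ENNReal.ofNNReal_finsetProd]
    _ ≤ ∏ i ∈ s, eLpNorm (f i) p μ := lintegral_prod_enorm_le_prod_eLpNorm hs hmeas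

end LpNorm

section RealLpNorm

open scoped ENNReal

variable {α : Type*} [MeasurableSpace α] {μ : Measure α} [IsProbabilityMeasure μ]
  {p : ℝ≥0∞} {f g h k : α → ℝ}

lemma integrable_mul_of_two_le (hp : 2 ≤ p) (hf : MemLp f p μ) (hg : MemLp g p μ) :
    Integrable (f * g) μ :=
  (hf.mono_exponent hp).integrable_mul (hg.mono_exponent hp)

lemma abs_integral_mul_le_of_two_le (hp : 2 ≤ p) (hf : MemLp f p μ) (hg : MemLp g p μ) :
    |μ[f * g]| ≤ lpNorm f p μ * lpNorm g p μ := by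
  simpa [Fin.prod_univ_two] using norm_integral_prod_le_prod_lpNorm (s := Finset.univ)
    (f := ![f, g]) (by simpa) (by simp [hf, hg])

lemma integrable_mul_mul_mul_of_four_le (hp : 4 ≤ p) (hf : MemLp f p μ) (hg : MemLp g p μ)
    (hh : MemLp h p μ) (hk : MemLp k p μ) : Integrable (f * g * h * k) μ := by
  simpa [Fin.prod_univ_four] using integrable_prod_of_card_le (s := Finset.univ)
    (f := ![f, g, h, k]) (by simpa) (by simp [Fin.forall_fin_succ, hf, hg, hh, hk])

lemma abs_integral_mul_mul_mul_le_of_four_le (hp : 4 ≤ p) (hf : MemLp f p μ) (hg : MemLp g p μ)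
    (hh : MemLp h p μ) (hk : MemLp k p μ) :
    |μ[f * g * h * k]| ≤ lpNorm f p μ * lpNorm g p μ * lpNorm h p μ * lpNorm k p μ := by
  simpa [Fin.prod_univ_four] using norm_integral_prod_le_prod_lpNorm (s := Finset.univ)
    (f := ![f, g, h, k]) (by simpa) (by simp [Fin.forall_fin_succ, hf, hg, hh, hk])

lemma abs_integral_mul_mul_mul_le_mul_pow {c : ℝ} (hp : 4 ≤ p) (hf : MemLp f p μ)
    (hg : MemLp g p μ) (hh : MemLp h p μ) (hk : MemLp k p μ) (hgc : lpNorm g p μ ≤ c)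
    (hhc : lpNorm h p μ ≤ c) (hkc : lpNorm k p μ ≤ c) :
    |μ[f * g * h * k]| ≤ lpNorm f p μ * c ^ 3 := by
  have hf₀ : 0 ≤ lpNorm f p μ := lpNorm_nonneg
  have hc : 0 ≤ c := lpNorm_nonneg.trans hgc
  calc |μ[f * g * h * k]|
      ≤ lpNorm f p μ * lpNorm g p μ * lpNorm h p μ * lpNorm k p μ :=
        abs_integral_mul_mul_mul_le_of_four_le hp hf hg hh hk
    _ ≤ lpNorm f p μ * c * c * c := by gcongr <;> first | positivity | exact lpNorm_nonneg
    _ = lpNorm f p μ * c ^ 3 := by ring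

lemma abs_integral_mul_mul_integral_mul_le_mul_pow {c : ℝ} (hp : 2 ≤ p) (hf : MemLp f p μ)
    (hg : MemLp g p μ) (hh : MemLp h p μ) (hk : MemLp k p μ) (hgc : lpNorm g p μ ≤ c)
    (hhc : lpNorm h p μ ≤ c) (hkc : lpNorm k p μ ≤ c) :
    |μ[f * g] * μ[h * k]| ≤ lpNorm f p μ * c ^ 3 := by
  have hf₀ : 0 ≤ lpNorm f p μ := lpNorm_nonneg
  have hc : 0 ≤ c := lpNorm_nonneg.trans hgc
  have hfg : |μ[f * g]| ≤ lpNorm f p μ * c :=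
    (abs_integral_mul_le_of_two_le hp hf hg).trans (by gcongr)
  have hhk : |μ[h * k]| ≤ c * c :=
    (abs_integral_mul_le_of_two_le hp hh hk).trans (mul_le_mul hhc hkc lpNorm_nonneg hc)
  calc |μ[f * g] * μ[h * k]|
      ≤ lpNorm f p μ * c * (c * c) := by rw [abs_mul]; gcongr
    _ = lpNorm f p μ * c ^ 3 := by ring

end RealLpNorm

section Decoupling

variable {Ω : Type*} [MeasurableSpace Ω] {μ : Measure Ω}

lemma integral_mul_eq_of_indepFun_sub {U S T : Ω → ℝ} (hU : AEStronglyMeasurable U μ)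
    (hUS : Integrable (U * S) μ) (hUT : Integrable (U * T) μ) (hTS : AEStronglyMeasurable (T - S) μ)
    (h : U ⟂ᵢ[μ] (T - S)) (hmean : μ[U] * μ[T - S] = 0) : μ[U * T] = μ[U * S] := by
  rw [← sub_eq_zero, ← integral_sub' hUT hUS, ← mul_sub, h.integral_mul_eq_mul_integral hU hTS,
    hmean]

lemma integral_mul_mul_eq_of_indepFun_sub {U S T : Ω → ℝ}
    (hU : AEStronglyMeasurable U μ) (hS : MemLp S 2 μ) (hT : MemLp T 2 μ)
    (hUSS : Integrable (U * S * S) μ) (hUST : Integrable (U * S * T) μ)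
    (hUTT : Integrable (U * T * T) μ) (h : U ⟂ᵢ[μ] (T - S)) :
    μ[U * T * T] = μ[U] * (μ[T * T] - 2 * μ[S * T] + μ[S * S])
      + 2 * μ[U * S * T] - μ[U * S * S] := by
  have hsq : Measurable fun x : ℝ => x * x := by fun_prop
  have hindep : μ[U * ((T - S) * (T - S))] = μ[U] * μ[(T - S) * (T - S)] :=
    (h.comp measurable_id hsq).integral_mul_eq_mul_integral hU
      ((hT.sub hS).integrable_mul (hT.sub hS)).aestronglyMeasurable
  have hST := hS.integrable_mul hT
  have hSS := hS.integrable_mul hS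
  have hTT := hT.integrable_mul hT
  have expandU : U * ((T - S) * (T - S)) = U * T * T - (2 : ℝ) • (U * S * T) + U * S * S := by
    ext ω
    simp only [Pi.mul_apply, Pi.sub_apply, Pi.add_apply, Pi.smul_apply, smul_eq_mul]
    ring
  have expand : (T - S) * (T - S) = T * T - (2 : ℝ) • (S * T) + S * S := by
    ext ω
    simp only [Pi.mul_apply, Pi.sub_apply, Pi.add_apply, Pi.smul_apply, smul_eq_mul]
    ring
  rw [expandU, expand, integral_add' (hUTT.sub (hUST.smul _)) hUSS,
    integral_sub' hUTT (hUST.smul _), integral_add' (hTT.sub (hST.smul _)) hSS,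
    integral_sub' hTT (hST.smul _)] at hindep
  simp only [Pi.smul_apply, smul_eq_mul, integral_const_mul] at hindep
  linear_combination hindep

lemma integral_mul_mul_mul_eq_of_indepFun_sub [IsProbabilityMeasure μ] {X P T : Ω → ℝ}
    (hX : MemLp X 4 μ) (hP : MemLp P 4 μ) (hT : MemLp T 4 μ) (h : X ⟂ᵢ[μ] (T - P))
    (hmean : μ[X] = 0) :
    μ[X * T * T * T] = 3 * μ[X * P * T * T] - 3 * μ[X * P * P * T] + μ[X * P * P * P] := by
  have hcube : Measurable fun x : ℝ => x * x * x := by fun_prop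
  have hTP := hT.sub hP
  have hindep : μ[X * ((T - P) * (T - P) * (T - P))] = 0 := by
    have hmeas : AEStronglyMeasurable ((T - P) * (T - P) * (T - P)) μ :=
      (hTP.1.mul hTP.1).mul hTP.1
    exact ((h.comp measurable_id hcube).integral_mul_eq_mul_integral hX.1 hmeas).trans
      (mul_eq_zero_of_left hmean _)
  have hXTTT := integrable_mul_mul_mul_of_four_le le_rfl hX hT hT hT
  have hXPTT := integrable_mul_mul_mul_of_four_le le_rfl hX hP hT hT
  have hXPPT := integrable_mul_mul_mul_of_four_le le_rfl hX hP hP hT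
  have hXPPP := integrable_mul_mul_mul_of_four_le le_rfl hX hP hP hP
  have expand : X * ((T - P) * (T - P) * (T - P)) = X * T * T * T - (3 : ℝ) • (X * P * T * T)
      + (3 : ℝ) • (X * P * P * T) - X * P * P * P := by
    ext ω
    simp only [Pi.mul_apply, Pi.sub_apply, Pi.add_apply, Pi.smul_apply, smul_eq_mul]
    ring
  rw [expand, integral_sub' ((hXTTT.sub (hXPTT.smul _)).add (hXPPT.smul _)) hXPPP,
    integral_add' (hXTTT.sub (hXPTT.smul _)) (hXPPT.smul _),
    integral_sub' hXTTT (hXPTT.smul _)] at hindep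
  simp only [Pi.smul_apply, smul_eq_mul, integral_const_mul] at hindep
  linear_combination hindep

/-- The random variables `P`, `Q`, `R` approximate `T` so well that the errors `T - P`, `T - Q` and
`T - R` are independent of `X`, of `(X, P)` and of `(X, P, Q)`, respectively. Under (LD3) this holds
for `X = ξᵢ`, `T = ∑ j, ξⱼ` and the sums `P`, `Q`, `R` of `ξⱼ` over `Aᵢ`, `Bᵢ` and `Cᵢ`. -/
structure IsLocalApproximation (X P Q R T : Ω → ℝ) (μ : Measure Ω) : Prop where
  indepFun_sub_fst : X ⟂ᵢ[μ] (T - P)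
  indepFun_sub_snd : (fun ω => (X ω, P ω)) ⟂ᵢ[μ] (T - Q)
  indepFun_sub_thd : (fun ω => (X ω, P ω, Q ω)) ⟂ᵢ[μ] (T - R)

namespace IsLocalApproximation

variable [IsProbabilityMeasure μ] {X P Q R T : Ω → ℝ}

lemma integral_mul_mul_mul_eq (h : IsLocalApproximation X P Q R T μ) (hX : MemLp X 4 μ)
    (hP : MemLp P 4 μ) (hQ : MemLp Q 4 μ) (hR : MemLp R 4 μ) (hT : MemLp T 4 μ) (hX₀ : μ[X] = 0)
    (hQ₀ : μ[T - Q] = 0) (hR₀ : μ[T - R] = 0) :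
    μ[X * T * T * T] =
      3 * (μ[X * P] * (μ[T * T] - 2 * μ[Q * R] + μ[Q * Q]) + 2 * μ[X * P * Q * R]
        - μ[X * P * Q * Q]) - 3 * μ[X * P * P * Q] + μ[X * P * P * P] := by
  have two_le_four : (2 : ENNReal) ≤ 4 := by norm_num
  have int₂ {f g : Ω → ℝ} (hf : MemLp f 4 μ) (hg : MemLp g 4 μ) : Integrable (f * g) μ :=
    integrable_mul_of_two_le two_le_four hf hg
  have int₄ {f g h k : Ω → ℝ} (hf : MemLp f 4 μ) (hg : MemLp g 4 μ) (hh : MemLp h 4 μ)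
      (hk : MemLp k 4 μ) : Integrable (f * g * h * k) μ :=
    integrable_mul_mul_mul_of_four_le le_rfl hf hg hh hk
  have indep_XP : (X * P) ⟂ᵢ[μ] (T - Q) :=
    h.indepFun_sub_snd.comp (φ := fun x : ℝ × ℝ => x.1 * x.2) (by fun_prop) measurable_id
  have indep_XPP : (X * P * P) ⟂ᵢ[μ] (T - Q) :=
    h.indepFun_sub_snd.comp (φ := fun x : ℝ × ℝ => x.1 * x.2 * x.2) (by fun_prop) measurable_id
  have indep_Q : Q ⟂ᵢ[μ] (T - R) :=
    h.indepFun_sub_thd.comp (φ := fun x : ℝ × ℝ × ℝ => x.2.2) (by fun_prop) measurable_id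
  have indep_XPQ : (X * P * Q) ⟂ᵢ[μ] (T - R) :=
    h.indepFun_sub_thd.comp (φ := fun x : ℝ × ℝ × ℝ => x.1 * x.2.1 * x.2.2) (by fun_prop)
      measurable_id
  have cube : μ[X * T * T * T] = 3 * μ[X * P * T * T] - 3 * μ[X * P * P * T] + μ[X * P * P * P] :=
    integral_mul_mul_mul_eq_of_indepFun_sub hX hP hT h.indepFun_sub_fst hX₀
  have square : μ[X * P * T * T] = μ[X * P] * (μ[T * T] - 2 * μ[Q * T] + μ[Q * Q])
      + 2 * μ[X * P * Q * T] - μ[X * P * Q * Q] :=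
    integral_mul_mul_eq_of_indepFun_sub (hX.1.mul hP.1) (hQ.mono_exponent two_le_four)
      (hT.mono_exponent two_le_four) (int₄ hX hP hQ hQ) (int₄ hX hP hQ hT) (int₄ hX hP hT hT)
      indep_XP
  have replace_XPPT : μ[X * P * P * T] = μ[X * P * P * Q] :=
    integral_mul_eq_of_indepFun_sub ((hX.1.mul hP.1).mul hP.1) (int₄ hX hP hP hQ)
      (int₄ hX hP hP hT) (hT.sub hQ).1 indep_XPP (mul_eq_zero_of_right _ hQ₀)
  have replace_QT : μ[Q * T] = μ[Q * R] :=
    integral_mul_eq_of_indepFun_sub hQ.1 (int₂ hQ hR) (int₂ hQ hT) (hT.sub hR).1 indep_Q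
      (mul_eq_zero_of_right _ hR₀)
  have replace_XPQT : μ[X * P * Q * T] = μ[X * P * Q * R] :=
    integral_mul_eq_of_indepFun_sub ((hX.1.mul hP.1).mul hQ.1) (int₄ hX hP hQ hR)
      (int₄ hX hP hQ hT) (hT.sub hR).1 indep_XPQ (mul_eq_zero_of_right _ hR₀)
  rw [cube, square, replace_XPPT, replace_QT, replace_XPQT]

lemma abs_integral_mul_mul_mul_sub_le (h : IsLocalApproximation X P Q R T μ) (hX : MemLp X 4 μ)
    (hP : MemLp P 4 μ) (hQ : MemLp Q 4 μ) (hR : MemLp R 4 μ) (hT : MemLp T 4 μ) (hX₀ : μ[X] = 0)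
    (hQ₀ : μ[T - Q] = 0) (hR₀ : μ[T - R] = 0) {c : ℝ} (hPc : lpNorm P 4 μ ≤ c)
    (hQc : lpNorm Q 4 μ ≤ c) (hRc : lpNorm R 4 μ ≤ c) :
    |μ[X * T * T * T] - 3 * μ[X * T] * μ[T * T]| ≤ 22 * (lpNorm X 4 μ * c ^ 3) := by
  have two_le_four : (2 : ENNReal) ≤ 4 := by norm_num
  have holder₄ {f g k : Ω → ℝ} (hf : MemLp f 4 μ) (hg : MemLp g 4 μ) (hk : MemLp k 4 μ)
      (hfc : lpNorm f 4 μ ≤ c) (hgc : lpNorm g 4 μ ≤ c) (hkc : lpNorm k 4 μ ≤ c) :=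
    abs_le.1 (abs_integral_mul_mul_mul_le_mul_pow le_rfl hX hf hg hk hfc hgc hkc)
  have holder₂ {f g k : Ω → ℝ} (hf : MemLp f 4 μ) (hg : MemLp g 4 μ) (hk : MemLp k 4 μ)
      (hfc : lpNorm f 4 μ ≤ c) (hgc : lpNorm g 4 μ ≤ c) (hkc : lpNorm k 4 μ ≤ c) :=
    abs_le.1 (abs_integral_mul_mul_integral_mul_le_mul_pow two_le_four hX hf hg hk hfc hgc hkc)
  have replace_XT : μ[X * T] = μ[X * P] :=
    integral_mul_eq_of_indepFun_sub hX.1 (integrable_mul_of_two_le two_le_four hX hP)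
      (integrable_mul_of_two_le two_le_four hX hT) (hT.sub hP).1 h.indepFun_sub_fst
      (mul_eq_zero_of_left hX₀ _)
  rw [h.integral_mul_mul_mul_eq hX hP hQ hR hT hX₀ hQ₀ hR₀, replace_XT]
  have hQR := holder₂ hP hQ hR hPc hQc hRc
  have hQQ := holder₂ hP hQ hQ hPc hQc hQc
  have hPQR := holder₄ hP hQ hR hPc hQc hRc
  have hPQQ := holder₄ hP hQ hQ hPc hQc hQc
  have hPPQ := holder₄ hP hP hQ hPc hPc hQc
  have hPPP := holder₄ hP hP hP hPc hPc hPc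
  rw [abs_le]
  constructor <;> linarith

end IsLocalApproximation

end Decoupling

section LocalDependence

open scoped Finset

variable {Ω ι : Type*} [MeasurableSpace Ω] {μ : Measure Ω} [Fintype ι] [DecidableEq ι]
  {A B C : ι → Finset ι} {κ : ℕ}

lemma integral_sum_sq_le_of_indepFun_sub [IsProbabilityMeasure μ] {ξ : ι → Ω → ℝ}
    (hC : ∀ i, #(C i) ≤ κ) (hC' : ∀ j, #{i | j ∈ C i} ≤ κ) (hξ : ∀ i, MemLp (ξ i) 2 μ)
    (hmean : ∀ i, μ[ξ i] = 0) (hindep : ∀ i, ξ i ⟂ᵢ[μ] (∑ j, ξ j - ∑ j ∈ C i, ξ j)) :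
    μ[(∑ i, ξ i) ^ 2] ≤ (κ : ℝ) * ∑ i, μ[ξ i ^ 2] := by
  have hsum (s : Finset ι) : MemLp (∑ j ∈ s, ξ j) 2 μ := memLp_finsetSum' s fun j _ => hξ j
  have norm_sq (i : ι) : lpNorm (ξ i) 2 μ ^ 2 = μ[ξ i ^ 2] :=
    lpNorm_pow_eq_integral_pow even_two two_ne_zero (hξ i).1
  have localize (i : ι) : μ[ξ i * ∑ j, ξ j] = μ[ξ i * ∑ j ∈ C i, ξ j] :=
    integral_mul_eq_of_indepFun_sub (hξ i).1 ((hξ i).integrable_mul (hsum _))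
      ((hξ i).integrable_mul (hsum _)) ((hsum _).sub (hsum _)).1 (hindep i)
      (mul_eq_zero_of_left (hmean i) _)
  calc μ[(∑ i, ξ i) ^ 2]
      = ∑ i, μ[ξ i * ∑ j, ξ j] := by
        rw [sq, Finset.sum_mul,
          ← integral_finsetSum _ fun i _ => (hξ i).integrable_mul (hsum Finset.univ)]
        simp only [Finset.sum_apply]
    _ ≤ ∑ i, lpNorm (ξ i) 2 μ * ∑ j ∈ C i, lpNorm (ξ j) 2 μ := by
        gcongr with i
        rw [localize i]
        refine (le_abs_self _).trans ?_
        refine (abs_integral_mul_le_of_two_le le_rfl (hξ i) (hsum _)).trans ?_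
        exact mul_le_mul_of_nonneg_left (lpNorm_sum_le (fun j _ => hξ j) one_le_two) lpNorm_nonneg
    _ ≤ κ * ∑ i, μ[ξ i ^ 2] := by
        simpa only [zero_add, pow_one, norm_sq] using
          sum_mul_sum_pow_le hC hC' (fun i => lpNorm_nonneg (f := ξ i) (p := 2) (μ := μ)) 0

/-- Condition (LD3) for the family `X` and the neighbourhoods `A i ⊆ B i ⊆ C i` of `i`: each `X i`
is independent of the variables outside `A i`, those inside `A i` are jointly independent of those
outside `B i`, and those inside `B i` of those outside `C i`. -/
structure LocallyDependent {E : ι → Type*} [∀ i, MeasurableSpace (E i)] (X : ∀ i, Ω → E i)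
    (A B C : ι → Finset ι) (μ : Measure Ω) : Prop where
  mem_fst (i : ι) : i ∈ A i
  fst_subset_snd (i : ι) : A i ⊆ B i
  snd_subset_thd (i : ι) : B i ⊆ C i
  indepFun_fst (i : ι) : X i ⟂ᵢ[μ] (fun ω => fun j : ((A i)ᶜ : Finset ι) => X j.1 ω)
  indepFun_snd (i : ι) : (fun ω => fun j : (A i : Finset ι) => X j.1 ω) ⟂ᵢ[μ]
    (fun ω => fun j : ((B i)ᶜ : Finset ι) => X j.1 ω)
  indepFun_thd (i : ι) : (fun ω => fun j : (B i : Finset ι) => X j.1 ω) ⟂ᵢ[μ]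
    (fun ω => fun j : ((C i)ᶜ : Finset ι) => X j.1 ω)

namespace LocallyDependent

lemma comp {E F : ι → Type*} [∀ i, MeasurableSpace (E i)] [∀ i, MeasurableSpace (F i)]
    {X : ∀ i, Ω → E i} (h : LocallyDependent X A B C μ) {g : ∀ i, E i → F i}
    (hg : ∀ i, Measurable (g i)) : LocallyDependent (fun i => g i ∘ X i) A B C μ := by
  have hgS (S : Finset ι) : Measurable fun (x : ∀ j : S, E j) (j : S) => g j (x j) := by
    fun_prop
  exact
    { mem_fst := h.mem_fst
      fst_subset_snd := h.fst_subset_snd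
      snd_subset_thd := h.snd_subset_thd
      indepFun_fst := fun i => (h.indepFun_fst i).comp (hg i) (hgS _)
      indepFun_snd := fun i => (h.indepFun_snd i).comp (hgS _) (hgS _)
      indepFun_thd := fun i => (h.indepFun_thd i).comp (hgS _) (hgS _) }

variable {ξ : ι → Ω → ℝ}

lemma isLocalApproximation (h : LocallyDependent ξ A B C μ) (i : ι) :
    IsLocalApproximation (ξ i) (∑ j ∈ A i, ξ j) (∑ j ∈ B i, ξ j) (∑ j ∈ C i, ξ j) (∑ j, ξ j) μ := by
  have sum_eq (S : Finset ι) : ∑ j ∈ S, ξ j = fun ω => ∑ j : S, ξ j ω := by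
    ext ω
    rw [Finset.sum_apply, Finset.sum_coe_sort S fun j => ξ j ω]
  have sum_sub_eq (S : Finset ι) :
      ∑ j, ξ j - ∑ j ∈ S, ξ j = fun ω => ∑ j : (Sᶜ : Finset ι), ξ j ω := by
    rw [← sum_eq, ← Finset.sum_compl_add_sum S, add_sub_cancel_right]
  have measurable_sum (S : Finset ι) : Measurable fun x : S → ℝ => ∑ j, x j := by fun_prop
  have hiA := h.mem_fst i
  have hAB := h.fst_subset_snd i
  constructor
  · rw [sum_sub_eq]
    exact (h.indepFun_fst i).comp measurable_id (measurable_sum _)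
  · rw [sum_sub_eq, sum_eq]
    exact (h.indepFun_snd i).comp (φ := fun x : A i → ℝ => (x ⟨i, hiA⟩, ∑ j, x j))
      (by fun_prop) (measurable_sum _)
  · rw [sum_sub_eq, sum_eq, sum_eq]
    exact (h.indepFun_thd i).comp
      (φ := fun x : B i → ℝ => (x ⟨i, hAB hiA⟩, ∑ j : A i, x ⟨j, hAB j.2⟩, ∑ j, x j))
      (by fun_prop) (measurable_sum _)

variable [IsProbabilityMeasure μ]

lemma abs_integral_mul_sum_cube_sub_le (h : LocallyDependent ξ A B C μ)
    (hξ : ∀ i, MemLp (ξ i) 4 μ) (hmean : ∀ i, μ[ξ i] = 0) (i : ι) :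
    |μ[ξ i * (∑ j, ξ j) * (∑ j, ξ j) * ∑ j, ξ j]
        - 3 * μ[ξ i * ∑ j, ξ j] * μ[(∑ j, ξ j) * ∑ j, ξ j]| ≤
      22 * (lpNorm (ξ i) 4 μ * (∑ j ∈ C i, lpNorm (ξ j) 4 μ) ^ 3) := by
  have hsum (s : Finset ι) : MemLp (∑ j ∈ s, ξ j) 4 μ := memLp_finsetSum' s fun j _ => hξ j
  have integral_sum (s : Finset ι) : μ[∑ j ∈ s, ξ j] = 0 := by
    simp only [Finset.sum_apply]
    rw [integral_finsetSum s fun j _ => (hξ j).integrable (by norm_num)]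
    exact Finset.sum_eq_zero fun j _ => hmean j
  have integral_sum_sub (s : Finset ι) : μ[∑ j, ξ j - ∑ j ∈ s, ξ j] = 0 := by
    rw [integral_sub' ((hsum _).integrable (by norm_num)) ((hsum _).integrable (by norm_num)),
      integral_sum, integral_sum, sub_zero]
  have minkowski {s : Finset ι} (hs : s ⊆ C i) :
      lpNorm (∑ j ∈ s, ξ j) 4 μ ≤ ∑ j ∈ C i, lpNorm (ξ j) 4 μ :=
    (lpNorm_sum_le (fun j _ => hξ j) (by norm_num)).trans
      (Finset.sum_le_sum_of_subset_of_nonneg hs fun _ _ _ => lpNorm_nonneg)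
  exact (h.isLocalApproximation i).abs_integral_mul_mul_mul_sub_le (hξ i) (hsum _) (hsum _)
    (hsum _) (hsum _) (hmean i) (integral_sum_sub _) (integral_sum_sub _)
    (minkowski ((h.fst_subset_snd i).trans (h.snd_subset_thd i)))
    (minkowski (h.snd_subset_thd i)) (minkowski subset_rfl)

lemma integral_sum_pow_four_le (h : LocallyDependent ξ A B C μ) (hC : ∀ i, #(C i) ≤ κ)
    (hC' : ∀ j, #{i | j ∈ C i} ≤ κ) (hξ : ∀ i, MemLp (ξ i) 4 μ) (hmean : ∀ i, μ[ξ i] = 0) :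
    μ[(∑ i, ξ i) ^ 4] ≤ 3 * μ[(∑ i, ξ i) ^ 2] ^ 2 + 22 * (κ : ℝ) ^ 3 * ∑ i, μ[ξ i ^ 4] := by
  set T := ∑ i, ξ i with hT_def
  have hT : MemLp T 4 μ := memLp_finsetSum' _ fun j _ => hξ j
  have norm_pow_four (i : ι) : lpNorm (ξ i) 4 μ ^ 4 = μ[ξ i ^ 4] :=
    lpNorm_pow_eq_integral_pow (by decide) four_ne_zero (hξ i).1
  have sum_cube : ∑ i, μ[ξ i * T * T * T] = μ[T ^ 4] := by
    rw [← integral_finsetSum _ fun i _ => integrable_mul_mul_mul_of_four_le le_rfl (hξ i) hT hT hT]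
    congr 1 with ω
    simp only [Pi.mul_apply, Pi.pow_apply, ← Finset.sum_mul, ← Finset.sum_apply, ← hT_def]
    ring
  have sum_fst : ∑ i, μ[ξ i * T] = μ[T ^ 2] := by
    rw [← integral_finsetSum _ fun i _ => integrable_mul_of_two_le (by norm_num) (hξ i) hT]
    congr 1 with ω
    simp only [Pi.mul_apply, Pi.pow_apply, ← Finset.sum_mul, ← Finset.sum_apply, ← hT_def]
    ring
  calc μ[T ^ 4]
      = ∑ i, μ[ξ i * T * T * T] := sum_cube.symm
    _ ≤ ∑ i, (3 * μ[ξ i * T] * μ[T * T]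
          + 22 * (lpNorm (ξ i) 4 μ * (∑ j ∈ C i, lpNorm (ξ j) 4 μ) ^ 3)) := by
        gcongr with i
        linarith [(abs_le.1 (h.abs_integral_mul_sum_cube_sub_le hξ hmean i)).2]
    _ = 3 * μ[T ^ 2] ^ 2 + 22 * ∑ i, lpNorm (ξ i) 4 μ * (∑ j ∈ C i, lpNorm (ξ j) 4 μ) ^ 3 := by
        rw [Finset.sum_add_distrib, ← Finset.sum_mul, ← Finset.mul_sum, ← Finset.mul_sum, sum_fst,
          ← sq T]
        ring
    _ ≤ 3 * μ[T ^ 2] ^ 2 + 22 * (κ ^ 3 * ∑ i, μ[ξ i ^ 4]) := by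
        gcongr
        simpa only [norm_pow_four] using
          sum_mul_sum_pow_le hC hC' (fun i => lpNorm_nonneg (f := ξ i) (p := 4) (μ := μ)) 2
    _ = 3 * μ[T ^ 2] ^ 2 + 22 * κ ^ 3 * ∑ i, μ[ξ i ^ 4] := by ring

end LocallyDependent

end LocalDependence

theorem stmt_15_general
    {Ω ι : Type*} [MeasurableSpace Ω] {μ : Measure Ω} [IsProbabilityMeasure μ]
    [Fintype ι] [DecidableEq ι] {E : ι → Type*} [∀ i, MeasurableSpace (E i)]
    {X : ∀ i, Ω → E i} {A B C : ι → Finset ι} (hX : ∀ i, AEMeasurable (X i) μ)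
    (hLD : LocallyDependent X A B C μ) {ξ : ι → Ω → ℝ}
    (hξfun : ∀ i, ∃ g : E i → ℝ, Measurable g ∧ ∀ ω, ξ i ω = g (X i ω))
    (hξmean : ∀ i, ∫ ω, ξ i ω ∂μ = 0) (hξ4 : ∀ i, Integrable (fun ω => ξ i ω ^ 4) μ) {κ : ℕ}
    (hC : ∀ i, (C i).card ≤ κ) (hC' : ∀ i, (Finset.univ.filter fun j => i ∈ C j).card ≤ κ) :
    ∫ ω, (∑ i, ξ i ω) ^ 2 ∂μ ≤ κ * ∑ i, ∫ ω, ξ i ω ^ 2 ∂μ ∧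
    ∫ ω, (∑ i, ξ i ω) ^ 4 ∂μ ≤
      3 * (∫ ω, (∑ i, ξ i ω) ^ 2 ∂μ) ^ 2 + 22 * κ ^ 3 * ∑ i, ∫ ω, ξ i ω ^ 4 ∂μ := by
  choose g hg hξg using hξfun
  obtain rfl : ξ = fun i => g i ∘ X i := by
    ext i ω
    exact hξg i ω
  have hξ : LocallyDependent (fun i => g i ∘ X i) A B C μ := hLD.comp hg
  have hL4 (i : ι) : MemLp (g i ∘ X i) 4 μ :=
    (memLp_natCast_iff_integrable_pow (by decide) four_ne_zero
      ((hg i).comp_aemeasurable (hX i)).aestronglyMeasurable).2 (hξ4 i)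
  have variance := integral_sum_sq_le_of_indepFun_sub hC hC'
    (fun i => (hL4 i).mono_exponent (by norm_num)) hξmean
    fun i => (hξ.isLocalApproximation i).indepFun_sub_thd.comp measurable_fst measurable_id
  have fourth_moment := hξ.integral_sum_pow_four_le hC hC' hL4 hξmean
  simp only [Pi.pow_apply, Finset.sum_apply] at variance fourth_moment
  exact ⟨variance, fourth_moment⟩

theorem stmt_15
    {Ω : Type*} [MeasurableSpace Ω] {μ : Measure Ω} [IsProbabilityMeasure μ]
    {ι : Type*} [Fintype ι] [DecidableEq ι]
    (X : ι → Ω → ℝ) (A B C : ι → Finset ι)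
    (hXmeas : ∀ i, Measurable (X i))
    (hiA : ∀ i, i ∈ A i) (hAB : ∀ i, A i ⊆ B i) (hBC : ∀ i, B i ⊆ C i)
    (hLD1 : ∀ i, IndepFun (X i) (fun ω => fun j : ((A i)ᶜ : Finset ι) => X j.1 ω) μ)
    (hLD2 : ∀ i, IndepFun (fun ω => fun j : (A i : Finset ι) => X j.1 ω)
      (fun ω => fun j : ((B i)ᶜ : Finset ι) => X j.1 ω) μ)
    (hLD3 : ∀ i, IndepFun (fun ω => fun j : (B i : Finset ι) => X j.1 ω)
      (fun ω => fun j : ((C i)ᶜ : Finset ι) => X j.1 ω) μ)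
    (ξ : ι → Ω → ℝ)
    (hξfun : ∀ i, ∃ g : ℝ → ℝ, Measurable g ∧ ∀ ω, ξ i ω = g (X i ω))
    (hξmean : ∀ i, ∫ ω, ξ i ω ∂μ = 0)
    (hξ4 : ∀ i, Integrable (fun ω => (ξ i ω) ^ 4) μ)
    (T : Ω → ℝ) (hT : ∀ ω, T ω = ∑ i, ξ i ω)
    (σsq : ℝ) (hσsq : σsq = ∫ ω, (T ω) ^ 2 ∂μ)
    (κ₁ : ℕ)
    (hκ₁ : κ₁ = Finset.univ.sup fun i => max (C i).card
      (Finset.univ.filter fun j => i ∈ C j).card) :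
    σsq ≤ (κ₁ : ℝ) * ∑ i, ∫ ω, (ξ i ω) ^ 2 ∂μ ∧
    (∫ ω, (T ω) ^ 4 ∂μ) ≤ 3 * σsq ^ 2 + 22 * (κ₁ : ℝ) ^ 3 * ∑ i, ∫ ω, (ξ i ω) ^ 4 ∂μ := by
  have hκ (i : ι) := max_le_iff.1 (Finset.sup_le_iff.1 hκ₁.ge i (Finset.mem_univ i))
  simp only [hσsq, hT]
  exact stmt_15_general (fun i => (hXmeas i).aemeasurable) ⟨hiA, hAB, hBC, hLD1, hLD2, hLD3⟩
    hξfun hξmean hξ4 (fun i => (hκ i).1) fun i => (hκ i).2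
end

section
/- Assume condition (LD4*), let κ = max_{i∈𝒥} max(|D_i*|, |{j ∈ 𝒥 : i ∈ D_j*}|) and τ = 1/(8κ). Define X̄_i = X_i·1{|X_i| ≤ τ}, W̄ = Σ_{i∈𝒥} X̄_i, Y_i = Σ_{j∈A_i} X_j, β₂ = Σ_{i∈𝒥} E X_i²·1{|X_i| > τ} and β₃ = Σ_{i∈𝒥} E|X_i|³·1{|X_i| ≤ τ}, and assume β₂ ≤ τ/16. Then there is an absolute constant C such that for every z ≥ 0, |P(W > z) − P(W̄ > z)| ≤ Σ_{i∈𝒥} P(|Y_i| > (z+1)/4) + C (z+1)^{−3} κ³ β₃ + 64 κ² β₂ {(1+z)^{−3} + P(W > (z−1)/2)}. -/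
open MeasureTheory ProbabilityTheory Real

/-!
When no `|X i|` exceeds `τ`, the sum `W` agrees with the sum `V` of the truncated variables, so the
difference of their tails is at most `∑ i, P(|X i| > τ, W > z)`, or the same with `V`. Removing the
block `Y i = ∑ j ∈ A i, X j` from `W` makes the two events independent, at the price
`P(|Y i| > (z + 1) / 4)`, and `∑ i, P(|X i| > τ) ≤ β₂ / τ ^ 2 = 64 κ ^ 2 β₂`.

The truncated block is at most `κ τ = 1 / 8`, hence free of charge, but leaves `P(V > z - 1 / 4)` to
be compared with `P(W > (z - 1) / 2)`. For moderate `z` Chebyshev's inequality suffices, as `W - V`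
has variance at most `κ β₂ ≤ 1 / 128`. For large `z` one uses the fourth moment of the centred sum
`S = V - E V = ∑ i, ζ i`, which is of order `1 + κ ^ 2 β₃`: expand each term of
`E S ^ 4 = ∑ i, E (ζ i * S ^ 3)` along the nested neighbourhoods of `i`.
-/

section

open Finset
open scoped ENNReal

section BoundedIncidence

variable {ι : Type*} [Fintype ι] [DecidableEq ι] {D : ι → Finset ι} {κ : ℕ}

/-- The relation `j ∈ D i` has degree at most `κ` in both directions: each neighbourhood `D i` has
at most `κ` elements, and each index lies in at most `κ` of them. -/
structure BoundedIncidence (D : ι → Finset ι) (κ : ℕ) : Prop where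
  card_le : ∀ i, #(D i) ≤ κ
  card_filter_mem_le : ∀ j, #{i | j ∈ D i} ≤ κ

lemma boundedIncidence_sup (D : ι → Finset ι) :
    BoundedIncidence D (univ.sup fun i ↦ max #(D i) #{j | i ∈ D j}) := by
  have hmax i := le_sup (f := fun i ↦ max #(D i) #{j | i ∈ D j}) (mem_univ i)
  exact ⟨fun i ↦ (le_max_left _ _).trans (hmax i), fun i ↦ (le_max_right _ _).trans (hmax i)⟩

lemma mul_mul_le_add_pow_three_div_three {x y z : ℝ} (hx : 0 ≤ x) (hy : 0 ≤ y) (hz : 0 ≤ z) :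
    x * y * z ≤ (x ^ 3 + y ^ 3 + z ^ 3) / 3 := by
  have hsum : 0 ≤ x + y + z := by positivity
  nlinarith [mul_nonneg hsum (sq_nonneg (x - y)), mul_nonneg hsum (sq_nonneg (x - z)),
    mul_nonneg hsum (sq_nonneg (y - z))]

namespace BoundedIncidence

lemma mono {A : ι → Finset ι} (hD : BoundedIncidence D κ) (hAD : ∀ i, A i ⊆ D i) :
    BoundedIncidence A κ where
  card_le i := (card_le_card (hAD i)).trans (hD.card_le i)
  card_filter_mem_le j :=
    (card_le_card (monotone_filter_right _ fun i _ hj ↦ hAD i hj)).trans (hD.card_filter_mem_le j)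

lemma pos_of_mem (hD : BoundedIncidence D κ) {i j : ι} (hj : j ∈ D i) : 0 < κ :=
  (card_pos.2 ⟨j, hj⟩).trans_le (hD.card_le i)

lemma sum_le (hD : BoundedIncidence D κ) (i : ι) {a : ι → ℝ} {b : ℝ} (hb : 0 ≤ b)
    (hab : ∀ j, a j ≤ b) : ∑ j ∈ D i, a j ≤ κ * b := by
  calc
    ∑ j ∈ D i, a j ≤ #(D i) * b := by
      simpa only [nsmul_eq_mul] using sum_le_card_nsmul _ _ _ fun j _ ↦ hab j
    _ ≤ κ * b := by
      gcongr
      exact hD.card_le i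

lemma sum_sum_le (hD : BoundedIncidence D κ) {a : ι → ℝ} (ha : ∀ i, 0 ≤ a i) :
    ∑ i, ∑ j ∈ D i, a j ≤ κ * ∑ j, a j := by
  calc
    ∑ i, ∑ j ∈ D i, a j = ∑ j, ∑ i with j ∈ D i, a j := sum_comm' (by simp)
    _ = ∑ j, (#{i | j ∈ D i} : ℝ) * a j := by simp only [sum_const, nsmul_eq_mul]
    _ ≤ ∑ j, κ * a j := by
      gcongr with j
      · exact ha j
      · exact hD.card_filter_mem_le j
    _ = κ * ∑ j, a j := (mul_sum _ _ _).symm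

lemma sum_card_mul_le (hD : BoundedIncidence D κ) {a : ι → ℝ} (ha : ∀ i, 0 ≤ a i) :
    ∑ i, #(D i) * a i ≤ κ * ∑ i, a i := by
  rw [mul_sum]
  gcongr with i
  · exact ha i
  · exact hD.card_le i

lemma mul_sum_mul_sum_le (hD : BoundedIncidence D κ) {a b c : ι → ℝ} (ha : ∀ i, 0 ≤ a i)
    (hb : ∀ i, 0 ≤ b i) (hc : ∀ i, 0 ≤ c i) (i : ι) :
    a i * (∑ j ∈ D i, b j) * ∑ k ∈ D i, c k ≤
      κ * (#(D i) * a i ^ 3 + ∑ j ∈ D i, b j ^ 3 + ∑ k ∈ D i, c k ^ 3) / 3 := by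
  have := ha i
  have hb3 : 0 ≤ ∑ j ∈ D i, b j ^ 3 := sum_nonneg fun j _ ↦ pow_nonneg (hb j) 3
  have hc3 : 0 ≤ ∑ k ∈ D i, c k ^ 3 := sum_nonneg fun k _ ↦ pow_nonneg (hc k) 3
  calc
    a i * (∑ j ∈ D i, b j) * ∑ k ∈ D i, c k = ∑ j ∈ D i, ∑ k ∈ D i, a i * b j * c k := by
      simp only [mul_sum, sum_mul, mul_assoc]
      exact sum_comm
    _ ≤ ∑ j ∈ D i, ∑ k ∈ D i, (a i ^ 3 + b j ^ 3 + c k ^ 3) / 3 := by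
      gcongr with j _ k _
      exact mul_mul_le_add_pow_three_div_three (ha i) (hb j) (hc k)
    _ = #(D i) * (#(D i) * a i ^ 3 + ∑ j ∈ D i, b j ^ 3 + ∑ k ∈ D i, c k ^ 3) / 3 := by
      simp only [← sum_div, sum_add_distrib, sum_const, nsmul_eq_mul, ← mul_sum]
      ring
    _ ≤ κ * (#(D i) * a i ^ 3 + ∑ j ∈ D i, b j ^ 3 + ∑ k ∈ D i, c k ^ 3) / 3 := by
      gcongr
      exact hD.card_le i

lemma sum_mul_sum_mul_sum_le (hD : BoundedIncidence D κ) {a b c : ι → ℝ} (ha : ∀ i, 0 ≤ a i)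
    (hb : ∀ i, 0 ≤ b i) (hc : ∀ i, 0 ≤ c i) :
    ∑ i, a i * (∑ j ∈ D i, b j) * ∑ k ∈ D i, c k ≤
      κ ^ 2 * ((∑ i, a i ^ 3 + ∑ i, b i ^ 3 + ∑ i, c i ^ 3) / 3) := by
  calc
    ∑ i, a i * (∑ j ∈ D i, b j) * ∑ k ∈ D i, c k
      ≤ ∑ i, κ * (#(D i) * a i ^ 3 + ∑ j ∈ D i, b j ^ 3 + ∑ k ∈ D i, c k ^ 3) / 3 :=
        sum_le_sum fun i _ ↦ hD.mul_sum_mul_sum_le ha hb hc i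
    _ = κ * (∑ i, #(D i) * a i ^ 3 + ∑ i, ∑ j ∈ D i, b j ^ 3 + ∑ i, ∑ k ∈ D i, c k ^ 3) / 3 := by
        simp only [← sum_div, ← mul_sum, sum_add_distrib]
    _ ≤ κ * (κ * ∑ i, a i ^ 3 + κ * ∑ i, b i ^ 3 + κ * ∑ i, c i ^ 3) / 3 := by
        gcongr
        · exact hD.sum_card_mul_le fun i ↦ pow_nonneg (ha i) 3
        · exact hD.sum_sum_le fun i ↦ pow_nonneg (hb i) 3
        · exact hD.sum_sum_le fun i ↦ pow_nonneg (hc i) 3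
    _ = κ ^ 2 * ((∑ i, a i ^ 3 + ∑ i, b i ^ 3 + ∑ i, c i ^ 3) / 3) := by ring

end BoundedIncidence

end BoundedIncidence

variable {Ω ι : Type*} [MeasurableSpace Ω] {μ : Measure Ω}

/-- Essentially bounded real random variables. This is `MemLp f ∞ μ` under a name of its own, so
that `fun_prop` can prove polynomial expressions in bounded variables bounded. -/
@[fun_prop]
def EssBounded (f : Ω → ℝ) (μ : Measure Ω) : Prop := MemLp f ∞ μ

namespace EssBounded

variable {f g : Ω → ℝ}

lemma of_abs_le {c : ℝ} (hf : AEMeasurable f μ) (hc : ∀ ω, |f ω| ≤ c) : EssBounded f μ :=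
  memLp_top_of_bound hf.aestronglyMeasurable c (.of_forall hc)

lemma memLp (hf : EssBounded f μ) [IsFiniteMeasure μ] (p : ℝ≥0∞) : MemLp f p μ :=
  MemLp.mono_exponent hf le_top

lemma integrable (hf : EssBounded f μ) [IsFiniteMeasure μ] : Integrable f μ :=
  memLp_one_iff_integrable.1 (hf.memLp 1)

@[fun_prop]
lemma const [IsFiniteMeasure μ] (c : ℝ) : EssBounded (fun _ ↦ c) μ := memLp_const c

@[fun_prop]
lemma add (hf : EssBounded f μ) (hg : EssBounded g μ) : EssBounded (fun ω ↦ f ω + g ω) μ :=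
  MemLp.add hf hg

@[fun_prop]
lemma sub (hf : EssBounded f μ) (hg : EssBounded g μ) : EssBounded (fun ω ↦ f ω - g ω) μ :=
  MemLp.sub hf hg

@[fun_prop]
lemma mul (hf : EssBounded f μ) (hg : EssBounded g μ) : EssBounded (fun ω ↦ f ω * g ω) μ :=
  MemLp.mul' hg hf

@[fun_prop]
lemma abs (hf : EssBounded f μ) : EssBounded (fun ω ↦ |f ω|) μ := MemLp.norm hf

@[fun_prop]
lemma pow [IsFiniteMeasure μ] (hf : EssBounded f μ) (n : ℕ) : EssBounded (fun ω ↦ f ω ^ n) μ := by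
  induction n with
  | zero => simpa only [pow_zero] using const 1
  | succ n ih => simpa only [pow_succ] using ih.mul hf

@[fun_prop]
lemma sum {s : Finset ι} {F : ι → Ω → ℝ} (hF : ∀ i ∈ s, EssBounded (F i) μ) :
    EssBounded (fun ω ↦ ∑ i ∈ s, F i ω) μ :=
  memLp_finsetSum s hF

end EssBounded

section Moments

variable [IsProbabilityMeasure μ] {f : Ω → ℝ}

lemma abs_integral_pow_le (n : ℕ) (hf : Integrable f μ)
    (hfn : Integrable (fun ω ↦ |f ω| ^ n) μ) : |∫ ω, f ω ∂μ| ^ n ≤ ∫ ω, |f ω| ^ n ∂μ := by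
  calc
    |∫ ω, f ω ∂μ| ^ n ≤ (∫ ω, |f ω| ∂μ) ^ n := by
      gcongr
      exact abs_integral_le_integral_abs
    _ ≤ ∫ ω, |f ω| ^ n ∂μ :=
      (convexOn_pow n).map_integral_le (by fun_prop) isClosed_Ici
        (.of_forall fun ω ↦ abs_nonneg (f ω)) hf.abs hfn

lemma integral_abs_sub_integral_pow_le (n : ℕ) (hf : Integrable f μ)
    (hfn : Integrable (fun ω ↦ |f ω| ^ n) μ) :
    ∫ ω, |f ω - ∫ ω', f ω' ∂μ| ^ n ∂μ ≤ 2 ^ n * ∫ ω, |f ω| ^ n ∂μ := by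
  obtain - | n := n
  · simp
  set m := ∫ ω, f ω ∂μ
  calc
    ∫ ω, |f ω - m| ^ (n + 1) ∂μ ≤ ∫ ω, 2 ^ n * (|f ω| ^ (n + 1) + |m| ^ (n + 1)) ∂μ := by
      refine integral_mono_of_nonneg (.of_forall fun ω ↦ by positivity) (by fun_prop)
        (.of_forall fun ω ↦ ?_)
      calc
        |f ω - m| ^ (n + 1) ≤ (|f ω| + |m|) ^ (n + 1) := by
          gcongr
          exact abs_sub _ _
        _ ≤ 2 ^ n * (|f ω| ^ (n + 1) + |m| ^ (n + 1)) :=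
          add_pow_le (abs_nonneg _) (abs_nonneg _) (n + 1)
    _ = 2 ^ n * (∫ ω, |f ω| ^ (n + 1) ∂μ + |m| ^ (n + 1)) := by
      rw [integral_const_mul, integral_add hfn (integrable_const _)]
      simp
    _ ≤ 2 ^ n * (∫ ω, |f ω| ^ (n + 1) ∂μ + ∫ ω, |f ω| ^ (n + 1) ∂μ) := by
      gcongr
      exact abs_integral_pow_le _ hf hfn
    _ = 2 ^ (n + 1) * ∫ ω, |f ω| ^ (n + 1) ∂μ := by ring

lemma integral_mul_abs_le_of_indepFun {U S V : Ω → ℝ} {b : ℝ} (hU : Integrable U μ)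
    (hS : Integrable S μ) (hV : Integrable V μ) (hU_nonneg : ∀ ω, 0 ≤ U ω)
    (hSV : ∀ ω, |S ω - V ω| ≤ b) (hUV : IndepFun U V μ) :
    ∫ ω, U ω * |S ω| ∂μ ≤ (∫ ω, |S ω| ∂μ + 2 * b) * ∫ ω, U ω ∂μ := by
  have hUV_abs : IndepFun U (fun ω ↦ |V ω|) μ := hUV.comp measurable_id measurable_abs
  have hV_le : ∫ ω, |V ω| ∂μ ≤ ∫ ω, |S ω| ∂μ + b := by
    calc
      ∫ ω, |V ω| ∂μ ≤ ∫ ω, (|S ω| + b) ∂μ :=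
        integral_mono hV.abs (by fun_prop) fun ω ↦ by
          linarith [abs_sub_abs_le_abs_sub (V ω) (S ω), abs_sub_comm (S ω) (V ω), hSV ω]
      _ = ∫ ω, |S ω| ∂μ + b := by simp [integral_add hS.abs (integrable_const b)]
  have hUV_int : Integrable (fun ω ↦ U ω * |V ω|) μ := hUV_abs.integrable_mul hU hV.abs
  calc
    ∫ ω, U ω * |S ω| ∂μ ≤ ∫ ω, (U ω * |V ω| + b * U ω) ∂μ := by
      refine integral_mono_of_nonneg
        (.of_forall fun ω ↦ mul_nonneg (hU_nonneg ω) (abs_nonneg _)) (by fun_prop)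
        (.of_forall fun ω ↦ ?_)
      calc
        U ω * |S ω| ≤ U ω * (|V ω| + b) := by
          gcongr
          · exact hU_nonneg ω
          · linarith [abs_sub_abs_le_abs_sub (S ω) (V ω), hSV ω]
        _ = U ω * |V ω| + b * U ω := by ring
    _ = (∫ ω, |V ω| ∂μ + b) * ∫ ω, U ω ∂μ := by
      rw [integral_add hUV_int (by fun_prop), integral_const_mul,
        hUV_abs.integral_fun_mul_eq_mul_integral hU.1 hV.abs.1]
      ring
    _ ≤ (∫ ω, |S ω| ∂μ + 2 * b) * ∫ ω, U ω ∂μ := by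
      refine mul_le_mul_of_nonneg_right ?_ (integral_nonneg hU_nonneg)
      linarith

end Moments

section LocalDependence

lemma indepFun_restrict_of_nested {X : ι → Ω → ℝ} {A : ι → Finset ι} {s s' t : Finset ι}
    (hA : ∀ i, i ∈ A i) (hs : s ⊆ s')
    (h : IndepFun (fun ω (l : s') (j : A l) ↦ X j ω) (fun ω (l : t) (j : A l) ↦ X j ω) μ) :
    IndepFun (fun ω (j : s) ↦ X j ω) (fun ω (j : t) ↦ X j ω) μ :=
  h.comp (φ := fun (v : ∀ l : s', A l → ℝ) (j : s) ↦ v ⟨j, hs j.2⟩ ⟨j, hA j⟩)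
    (ψ := fun (v : ∀ l : t, A l → ℝ) (j : t) ↦ v j ⟨j, hA j⟩) (by fun_prop) (by fun_prop)

variable [Fintype ι] [DecidableEq ι]

lemma sum_sub_sum_eq_sum_compl (f : ι → ℝ) (s : Finset ι) :
    ∑ j, f j - ∑ j ∈ s, f j = ∑ j : (sᶜ : Finset ι), f j := by
  rw [sum_coe_sort sᶜ f, ← sum_add_sum_compl s, add_sub_cancel_left]

/-- Condition (LD3) of Chen and Shao: three nested neighbourhoods of each index `i`, such that `X i`
is independent of the variables outside `A i`, those in `A i` of those outside `B i`, and those in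
`B i` of those outside `C i`. -/
structure LocalDependence (X : ι → Ω → ℝ) (A B C : ι → Finset ι) (μ : Measure Ω) : Prop where
  mem_left : ∀ i, i ∈ A i
  left_subset : ∀ i, A i ⊆ B i
  mid_subset : ∀ i, B i ⊆ C i
  indepFun_self : ∀ i, IndepFun (X i) (fun ω (j : ((A i)ᶜ : Finset ι)) ↦ X j ω) μ
  indepFun_left : ∀ i, IndepFun (fun ω (j : A i) ↦ X j ω)
    (fun ω (j : ((B i)ᶜ : Finset ι)) ↦ X j ω) μ
  indepFun_mid : ∀ i, IndepFun (fun ω (j : B i) ↦ X j ω)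
    (fun ω (j : ((C i)ᶜ : Finset ι)) ↦ X j ω) μ

namespace LocalDependence

variable {X : ι → Ω → ℝ} {A B C : ι → Finset ι}

lemma comp (h : LocalDependence X A B C μ) {φ : ι → ℝ → ℝ} (hφ : ∀ i, Measurable (φ i)) :
    LocalDependence (fun i ω ↦ φ i (X i ω)) A B C μ := by
  have hφ_pi (s : Finset ι) : Measurable fun (v : s → ℝ) (j : s) ↦ φ j (v j) := by fun_prop
  exact ⟨h.mem_left, h.left_subset, h.mid_subset, fun i ↦ (h.indepFun_self i).comp (hφ i) (hφ_pi _),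
    fun i ↦ (h.indepFun_left i).comp (hφ_pi _) (hφ_pi _),
    fun i ↦ (h.indepFun_mid i).comp (hφ_pi _) (hφ_pi _)⟩

lemma indepFun_sum_comp_sub (h : LocalDependence X A B C μ) (i : ι) {φ : ι → ℝ → ℝ}
    (hφ : ∀ j, Measurable (φ j)) :
    IndepFun (X i) (fun ω ↦ ∑ j, φ j (X j ω) - ∑ j ∈ A i, φ j (X j ω)) μ := by
  have hsum : Measurable fun v : ((A i)ᶜ : Finset ι) → ℝ ↦ ∑ j : ((A i)ᶜ : Finset ι), φ j (v j) :=
    by fun_prop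
  have := (h.indepFun_self i).comp measurable_id hsum
  simpa only [Function.comp_def, id, sum_sub_sum_eq_sum_compl (fun j ↦ φ j (X j _))] using this

lemma indepFun_left_sum_sub (h : LocalDependence X A B C μ) (i : ι) :
    IndepFun (fun ω ↦ (X i ω, ∑ j ∈ A i, X j ω)) (fun ω ↦ ∑ j, X j ω - ∑ j ∈ B i, X j ω) μ := by
  have hleft : Measurable fun v : A i → ℝ ↦ (v ⟨i, h.mem_left i⟩, ∑ j, v j) := by fun_prop
  have hright : Measurable fun v : ((B i)ᶜ : Finset ι) → ℝ ↦ ∑ j, v j := by fun_prop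
  have := (h.indepFun_left i).comp hleft hright
  simpa only [Function.comp_def, sum_sub_sum_eq_sum_compl (fun j ↦ X j _),
    ← sum_coe_sort (A i) (fun j ↦ X j _)] using this

lemma indepFun_mid_sum_sub (h : LocalDependence X A B C μ) (i : ι) :
    IndepFun (fun ω ↦ (X i ω, ∑ j ∈ A i, X j ω, ∑ j ∈ B i, X j ω))
      (fun ω ↦ ∑ j, X j ω - ∑ j ∈ C i, X j ω) μ := by
  have hAB := h.left_subset i
  have hleft : Measurable fun v : B i → ℝ ↦
      (v ⟨i, hAB (h.mem_left i)⟩, ∑ j : A i, v ⟨j, hAB j.2⟩, ∑ j, v j) := by fun_prop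
  have hright : Measurable fun v : ((C i)ᶜ : Finset ι) → ℝ ↦ ∑ j, v j := by fun_prop
  have := (h.indepFun_mid i).comp hleft hright
  simpa only [Function.comp_def, sum_sub_sum_eq_sum_compl (fun j ↦ X j _),
    ← sum_coe_sort (A i) (fun j ↦ X j _), ← sum_coe_sort (B i) (fun j ↦ X j _)] using this

end LocalDependence

end LocalDependence

section FourthMoment

lemma integral_mul_eq_zero_of_indepFun {f g : Ω → ℝ} (hf : EssBounded f μ) (hg : EssBounded g μ)
    (hf_mean : ∫ ω, f ω ∂μ = 0) (hfg : IndepFun f g μ) : ∫ ω, f ω * g ω ∂μ = 0 := by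
  rw [hfg.integral_fun_mul_eq_mul_integral hf.1 hg.1, hf_mean, zero_mul]

variable [IsProbabilityMeasure μ]

-- Expanding `s ^ 3` around `s - t` and then the arising `s ^ 2` around `s - u` leaves leading terms
-- that factor by independence.
lemma mul_pow_three_le {x s t u b : ℝ} (e : ℝ) (ht : |t| ≤ b) (hu : |u| ≤ b) :
    x * s ^ 3 ≤ x * (s - t) ^ 3 + 3 * e * s ^ 2 + 3 * ((x * t - e) * (s - u) ^ 2) +
      (3 * ((2 * |(x * t - e) * u| + |x| * t ^ 2) * |s|) +
        3 / 2 * b * (2 * |(x * t - e) * u| + |x| * t ^ 2)) := by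
  set y := x * t - e with hy
  have hyus : y * u * s ≤ |y * u| * |s| := (le_abs_self _).trans_eq (abs_mul _ _)
  have hyuu : -(y * u * u) ≤ b * |y * u| := by
    refine (neg_le_abs _).trans ?_
    rw [abs_mul, mul_comm]
    gcongr
  have hxts : -(x * t ^ 2 * s) ≤ |x| * t ^ 2 * |s| := by
    refine (neg_le_abs _).trans_eq ?_
    rw [abs_mul, abs_mul, abs_sq]
  have hxtt : x * t ^ 2 * t ≤ b * (|x| * t ^ 2) := by
    refine (le_abs_self _).trans ?_
    rw [abs_mul, abs_mul, abs_sq, mul_comm]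
    gcongr
  have hxt_nonneg : 0 ≤ b * (|x| * t ^ 2) :=
    mul_nonneg ((abs_nonneg t).trans ht) (by positivity)
  have hexpand : x * s ^ 3 = x * (s - t) ^ 3 + 3 * e * s ^ 2 + 3 * (y * (s - u) ^ 2) +
      (6 * (y * u * s) + 3 * -(y * u * u) + 3 * -(x * t ^ 2 * s) + x * t ^ 2 * t) := by
    rw [hy]
    ring
  linarith

lemma integral_mul_pow_three_le {x s t u v : Ω → ℝ} {b : ℝ} (hx : EssBounded x μ)
    (hs : EssBounded s μ) (ht : EssBounded t μ) (hu : EssBounded u μ) (hv : EssBounded v μ)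
    (hx_mean : ∫ ω, x ω ∂μ = 0) (htb : ∀ ω, |t ω| ≤ b) (hub : ∀ ω, |u ω| ≤ b)
    (hvb : ∀ ω, |v ω| ≤ b) (hx_indep : IndepFun x (fun ω ↦ s ω - t ω) μ)
    (hxt_indep : IndepFun (fun ω ↦ (x ω, t ω)) (fun ω ↦ s ω - u ω) μ)
    (hxtu_indep : IndepFun (fun ω ↦ (x ω, t ω, u ω)) (fun ω ↦ s ω - v ω) μ) :
    ∫ ω, x ω * s ω ^ 3 ∂μ ≤ 3 * (∫ ω, x ω * t ω ∂μ) * ∫ ω, s ω ^ 2 ∂μ +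
      3 * (∫ ω, |s ω| ∂μ + 5 / 2 * b) *
        ∫ ω, (2 * |(x ω * t ω - ∫ ω', x ω' * t ω' ∂μ) * u ω| + |x ω| * t ω ^ 2) ∂μ := by
  set e := ∫ ω, x ω * t ω ∂μ with he
  set y : Ω → ℝ := fun ω ↦ x ω * t ω - e with hy
  set U : Ω → ℝ := fun ω ↦ 2 * |y ω * u ω| + |x ω| * t ω ^ 2
  have hy_bdd : EssBounded y μ := by fun_prop
  have hU_bdd : EssBounded U μ := by fun_prop
  have hy_mean : ∫ ω, y ω ∂μ = 0 := by
    rw [hy, integral_sub (hx.mul ht).integrable (integrable_const e)]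
    simp [← he]
  have hx_cube : ∫ ω, x ω * (s ω - t ω) ^ 3 ∂μ = 0 :=
    integral_mul_eq_zero_of_indepFun hx (by fun_prop) hx_mean <|
      hx_indep.comp (ψ := fun w : ℝ ↦ w ^ 3) measurable_id (by fun_prop)
  have hy_sq : ∫ ω, y ω * (s ω - u ω) ^ 2 ∂μ = 0 :=
    integral_mul_eq_zero_of_indepFun hy_bdd (by fun_prop) hy_mean <|
      hxt_indep.comp (φ := fun p : ℝ × ℝ ↦ p.1 * p.2 - e) (ψ := fun w : ℝ ↦ w ^ 2)
        (by fun_prop) (by fun_prop)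
  have hU_decouple : ∫ ω, U ω * |s ω| ∂μ ≤ (∫ ω, |s ω| ∂μ + 2 * b) * ∫ ω, U ω ∂μ := by
    refine integral_mul_abs_le_of_indepFun hU_bdd.integrable hs.integrable (hs.sub hv).integrable
      (fun ω ↦ by positivity) (fun ω ↦ by simpa using hvb ω) ?_
    have hmeas : Measurable fun p : ℝ × ℝ × ℝ ↦
      2 * |(p.1 * p.2.1 - e) * p.2.2| + |p.1| * p.2.1 ^ 2 := by fun_prop
    exact hxtu_indep.comp hmeas measurable_id
  calc
    ∫ ω, x ω * s ω ^ 3 ∂μ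
      ≤ ∫ ω, (x ω * (s ω - t ω) ^ 3 + 3 * e * s ω ^ 2 + 3 * (y ω * (s ω - u ω) ^ 2) +
          (3 * (U ω * |s ω|) + 3 / 2 * b * U ω)) ∂μ :=
        integral_mono (by fun_prop : EssBounded _ μ).integrable
          (by fun_prop : EssBounded _ μ).integrable
          fun ω ↦ mul_pow_three_le e (htb ω) (hub ω)
    _ = 3 * e * ∫ ω, s ω ^ 2 ∂μ + (3 * ∫ ω, U ω * |s ω| ∂μ + 3 / 2 * b * ∫ ω, U ω ∂μ) := by
        iterate 4 rw [integral_add (by fun_prop : EssBounded _ μ).integrable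
          (by fun_prop : EssBounded _ μ).integrable]
        simp only [integral_const_mul, hx_cube, hy_sq, mul_zero, zero_add, add_zero]
    _ ≤ 3 * e * ∫ ω, s ω ^ 2 ∂μ + 3 * (∫ ω, |s ω| ∂μ + 5 / 2 * b) * ∫ ω, U ω ∂μ := by
        linarith

lemma integral_expansion_error_le {x t u r : Ω → ℝ} (hx : EssBounded x μ) (ht : EssBounded t μ)
    (hu : EssBounded u μ) (hr : EssBounded r μ) (htr : ∀ ω, |t ω| ≤ r ω)
    (hur : ∀ ω, |u ω| ≤ r ω) :
    ∫ ω, (2 * |(x ω * t ω - ∫ ω', x ω' * t ω' ∂μ) * u ω| + |x ω| * t ω ^ 2) ∂μ ≤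
      3 * ∫ ω, |x ω| * r ω * r ω ∂μ + 2 * ((∫ ω, |x ω| * r ω ∂μ) * ∫ ω, r ω ∂μ) := by
  set e := ∫ ω, x ω * t ω ∂μ
  set q := ∫ ω, |x ω| * r ω ∂μ
  have hr_nonneg ω : 0 ≤ r ω := (abs_nonneg _).trans (htr ω)
  have hxt ω : |x ω * t ω| ≤ |x ω| * r ω := by
    rw [abs_mul]
    gcongr
    exact htr ω
  have he : |e| ≤ q := abs_integral_le_integral_abs.trans <|
    integral_mono (hx.mul ht).abs.integrable (hx.abs.mul hr).integrable hxt
  have hpointwise ω : 2 * |(x ω * t ω - e) * u ω| + |x ω| * t ω ^ 2 ≤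
      3 * (|x ω| * r ω * r ω) + 2 * (q * r ω) := by
    have hfirst : |(x ω * t ω - e) * u ω| ≤ (|x ω| * r ω + q) * r ω := by
      rw [abs_mul]
      gcongr
      · exact add_nonneg (mul_nonneg (abs_nonneg _) (hr_nonneg ω)) ((abs_nonneg e).trans he)
      · exact (abs_sub _ _).trans (add_le_add (hxt ω) he)
      · exact hur ω
    have hsecond : |x ω| * t ω ^ 2 ≤ |x ω| * r ω ^ 2 := by
      gcongr |x ω| * ?_
      exact sq_le_sq.2 ((htr ω).trans (le_abs_self _))
    linarith
  calc
    ∫ ω, (2 * |(x ω * t ω - e) * u ω| + |x ω| * t ω ^ 2) ∂μ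
      ≤ ∫ ω, (3 * (|x ω| * r ω * r ω) + 2 * (q * r ω)) ∂μ :=
        integral_mono (by fun_prop : EssBounded _ μ).integrable
          (by fun_prop : EssBounded _ μ).integrable hpointwise
    _ = 3 * ∫ ω, |x ω| * r ω * r ω ∂μ + 2 * (q * ∫ ω, r ω ∂μ) := by
        rw [integral_add (by fun_prop : EssBounded _ μ).integrable
          (by fun_prop : EssBounded _ μ).integrable]
        simp only [integral_const_mul]

variable [Fintype ι] [DecidableEq ι] {ζ : ι → Ω → ℝ} {D : ι → Finset ι} {κ : ℕ}

lemma BoundedIncidence.sum_integral_mul_mul_le (hD : BoundedIncidence D κ)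
    (hζ : ∀ i, EssBounded (ζ i) μ) :
    ∑ i, ∫ ω, |ζ i ω| * (∑ j ∈ D i, |ζ j ω|) * ∑ j ∈ D i, |ζ j ω| ∂μ ≤
      κ ^ 2 * ∑ i, ∫ ω, |ζ i ω| ^ 3 ∂μ := by
  rw [← integral_finsetSum _ fun i _ ↦ (by fun_prop : EssBounded _ μ).integrable,
    ← integral_finsetSum _ fun i _ ↦ (by fun_prop : EssBounded _ μ).integrable,
    ← integral_const_mul]
  refine integral_mono (by fun_prop : EssBounded _ μ).integrable
    (by fun_prop : EssBounded _ μ).integrable fun ω ↦ ?_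
  refine (hD.sum_mul_sum_mul_sum_le (fun i ↦ abs_nonneg (ζ i ω)) (fun i ↦ abs_nonneg (ζ i ω))
    fun i ↦ abs_nonneg (ζ i ω)).trans_eq ?_
  ring

lemma BoundedIncidence.sum_integral_mul_integral_le (hD : BoundedIncidence D κ)
    (hζ : ∀ i, EssBounded (ζ i) μ) :
    ∑ i, (∫ ω, |ζ i ω| * ∑ j ∈ D i, |ζ j ω| ∂μ) * ∫ ω, ∑ j ∈ D i, |ζ j ω| ∂μ ≤
      κ ^ 2 * ∑ i, ∫ ω, |ζ i ω| ^ 3 ∂μ := by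
  set m : ι → ℝ := fun j ↦ ∫ ω, |ζ j ω| ∂μ
  have hm_nonneg j : 0 ≤ m j := integral_nonneg fun ω ↦ abs_nonneg _
  have hm_pow j : m j ^ 3 ≤ ∫ ω, |ζ j ω| ^ 3 ∂μ := by
    simpa only [abs_abs, m, abs_of_nonneg (hm_nonneg j)] using
      abs_integral_pow_le 3 (hζ j).abs.integrable
        (by fun_prop : EssBounded (fun ω ↦ |(|ζ j ω|)| ^ 3) μ).integrable
  calc
    ∑ i, (∫ ω, |ζ i ω| * ∑ j ∈ D i, |ζ j ω| ∂μ) * ∫ ω, ∑ j ∈ D i, |ζ j ω| ∂μ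
      = ∫ ω, ∑ i, |ζ i ω| * (∑ j ∈ D i, |ζ j ω|) * ∑ k ∈ D i, m k ∂μ := by
        rw [integral_finsetSum _ fun i _ ↦ (by fun_prop : EssBounded _ μ).integrable]
        refine sum_congr rfl fun i _ ↦ ?_
        rw [integral_mul_const, integral_finsetSum _ fun j _ ↦ (hζ j).abs.integrable]
    _ ≤ ∫ ω, κ ^ 2 * ((∑ i, |ζ i ω| ^ 3 + ∑ i, |ζ i ω| ^ 3 + ∑ i, m i ^ 3) / 3) ∂μ :=
        integral_mono (by fun_prop : EssBounded _ μ).integrable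
          (by simp only [div_eq_mul_inv]; fun_prop : EssBounded _ μ).integrable fun ω ↦
          hD.sum_mul_sum_mul_sum_le (fun i ↦ abs_nonneg _) (fun i ↦ abs_nonneg _) hm_nonneg
    _ = κ ^ 2 * ((2 * ∑ i, ∫ ω, |ζ i ω| ^ 3 ∂μ + ∑ i, m i ^ 3) / 3) := by
        rw [integral_const_mul, integral_div,
          integral_add (by fun_prop : EssBounded _ μ).integrable (integrable_const _),
          integral_add (by fun_prop : EssBounded _ μ).integrable
            (by fun_prop : EssBounded _ μ).integrable,
          integral_finsetSum _ fun i _ ↦ (by fun_prop : EssBounded _ μ).integrable]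
        simp only [integral_const, probReal_univ, one_smul, two_mul]
    _ ≤ κ ^ 2 * ((2 * ∑ i, ∫ ω, |ζ i ω| ^ 3 ∂μ + ∑ i, ∫ ω, |ζ i ω| ^ 3 ∂μ) / 3) := by
        gcongr with i
        exact hm_pow i
    _ = κ ^ 2 * ∑ i, ∫ ω, |ζ i ω| ^ 3 ∂μ := by ring

lemma LocalDependence.sum_integral_mul_sum {A B C : ι → Finset ι}
    (h : LocalDependence ζ A B C μ) (hζ : ∀ i, EssBounded (ζ i) μ)
    (hζ_mean : ∀ i, ∫ ω, ζ i ω ∂μ = 0) :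
    ∑ i, ∫ ω, ζ i ω * ∑ j ∈ A i, ζ j ω ∂μ = ∫ ω, (∑ i, ζ i ω) ^ 2 ∂μ := by
  have hterm i : ∫ ω, ζ i ω * ∑ j, ζ j ω ∂μ = ∫ ω, ζ i ω * ∑ j ∈ A i, ζ j ω ∂μ := by
    have hzero : ∫ ω, ζ i ω * (∑ j, ζ j ω - ∑ j ∈ A i, ζ j ω) ∂μ = 0 :=
      integral_mul_eq_zero_of_indepFun (hζ i) (by fun_prop) (hζ_mean i)
        (h.indepFun_sum_comp_sub i fun _ ↦ measurable_id)
    simp only [mul_sub] at hzero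
    rwa [integral_sub (by fun_prop : EssBounded _ μ).integrable
      (by fun_prop : EssBounded _ μ).integrable, sub_eq_zero] at hzero
  simp only [← hterm, sq, sum_mul]
  exact (integral_finsetSum _ fun i _ ↦ (by fun_prop : EssBounded _ μ).integrable).symm

lemma LocalDependence.integral_mul_sum_pow_three_le {A B C : ι → Finset ι} {c : ℝ}
    (h : LocalDependence ζ A B C μ) (hC : BoundedIncidence C κ)
    (hζ : ∀ i, EssBounded (ζ i) μ) (hζ_mean : ∀ i, ∫ ω, ζ i ω ∂μ = 0)
    (hc : 0 ≤ c) (hζ_le : ∀ i ω, |ζ i ω| ≤ c) (i : ι) :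
    ∫ ω, ζ i ω * (∑ j, ζ j ω) ^ 3 ∂μ ≤
      3 * (∫ ω, ζ i ω * ∑ j ∈ A i, ζ j ω ∂μ) * ∫ ω, (∑ j, ζ j ω) ^ 2 ∂μ +
        3 * (∫ ω, |∑ j, ζ j ω| ∂μ + 5 / 2 * (κ * c)) *
          (3 * ∫ ω, |ζ i ω| * (∑ j ∈ C i, |ζ j ω|) * ∑ j ∈ C i, |ζ j ω| ∂μ +
            2 * ((∫ ω, |ζ i ω| * ∑ j ∈ C i, |ζ j ω| ∂μ) * ∫ ω, ∑ j ∈ C i, |ζ j ω| ∂μ)) := by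
  have hS_nonneg : 0 ≤ ∫ ω, |∑ j, ζ j ω| ∂μ := integral_nonneg fun ω ↦ abs_nonneg _
  have hsum_le s (hs : s ⊆ C i) ω : |∑ j ∈ s, ζ j ω| ≤ ∑ j ∈ C i, |ζ j ω| :=
    (abs_sum_le_sum_abs _ _).trans (sum_le_sum_of_subset_of_nonneg hs fun _ _ _ ↦ abs_nonneg _)
  have hbound s (hs : s ⊆ C i) ω : |∑ j ∈ s, ζ j ω| ≤ κ * c :=
    (hsum_le s hs ω).trans (hC.sum_le i hc fun j ↦ hζ_le j ω)
  have hBC := h.mid_subset i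
  have hAC := (h.left_subset i).trans hBC
  refine (integral_mul_pow_three_le (hζ i) (by fun_prop) (t := fun ω ↦ ∑ j ∈ A i, ζ j ω)
    (by fun_prop) (u := fun ω ↦ ∑ j ∈ B i, ζ j ω) (by fun_prop) (v := fun ω ↦ ∑ j ∈ C i, ζ j ω)
    (by fun_prop) (hζ_mean i) (hbound _ hAC) (hbound _ hBC) (hbound _ subset_rfl)
    (h.indepFun_sum_comp_sub i fun _ ↦ measurable_id) (h.indepFun_left_sum_sub i)
    (h.indepFun_mid_sum_sub i)).trans ?_
  refine add_le_add_right (mul_le_mul_of_nonneg_left ?_ (by positivity)) _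
  exact integral_expansion_error_le (hζ i) (by fun_prop) (by fun_prop) (by fun_prop) (hsum_le _ hAC)
    (hsum_le _ hBC)

theorem LocalDependence.integral_sum_pow_four_le {A B C : ι → Finset ι} {c : ℝ}
    (h : LocalDependence ζ A B C μ) (hC : BoundedIncidence C κ)
    (hζ : ∀ i, AEMeasurable (ζ i) μ) (hζ_mean : ∀ i, ∫ ω, ζ i ω ∂μ = 0)
    (hc : 0 ≤ c) (hζ_le : ∀ i ω, |ζ i ω| ≤ c) :
    ∫ ω, (∑ i, ζ i ω) ^ 4 ∂μ ≤ 3 * (∫ ω, (∑ i, ζ i ω) ^ 2 ∂μ) ^ 2 +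
      15 * (∫ ω, |∑ i, ζ i ω| ∂μ + 5 / 2 * (κ * c)) * κ ^ 2 * ∑ i, ∫ ω, |ζ i ω| ^ 3 ∂μ := by
  have hbdd i : EssBounded (ζ i) μ := .of_abs_le (hζ i) (hζ_le i)
  have hS_nonneg : 0 ≤ ∫ ω, |∑ i, ζ i ω| ∂μ := integral_nonneg fun ω ↦ abs_nonneg _
  set a := ∫ ω, |∑ i, ζ i ω| ∂μ + 5 / 2 * (κ * c)
  calc
    ∫ ω, (∑ i, ζ i ω) ^ 4 ∂μ = ∑ i, ∫ ω, ζ i ω * (∑ j, ζ j ω) ^ 3 ∂μ := by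
      rw [← integral_finsetSum _ fun i _ ↦ (by fun_prop : EssBounded _ μ).integrable]
      simp only [← sum_mul, pow_succ' _ 3]
    _ ≤ _ := sum_le_sum fun i _ ↦ h.integral_mul_sum_pow_three_le hC hbdd hζ_mean hc hζ_le i
    _ = 3 * (∫ ω, (∑ i, ζ i ω) ^ 2 ∂μ) ^ 2 + 3 * a *
        (3 * ∑ i, ∫ ω, |ζ i ω| * (∑ j ∈ C i, |ζ j ω|) * ∑ j ∈ C i, |ζ j ω| ∂μ +
          2 * ∑ i, (∫ ω, |ζ i ω| * ∑ j ∈ C i, |ζ j ω| ∂μ) * ∫ ω, ∑ j ∈ C i, |ζ j ω| ∂μ) := by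
      rw [sum_add_distrib, ← sum_mul, ← mul_sum, ← mul_sum, h.sum_integral_mul_sum hbdd hζ_mean,
        sum_add_distrib, ← mul_sum, ← mul_sum]
      ring
    _ ≤ 3 * (∫ ω, (∑ i, ζ i ω) ^ 2 ∂μ) ^ 2 + 3 * a *
        (3 * (κ ^ 2 * ∑ i, ∫ ω, |ζ i ω| ^ 3 ∂μ) + 2 * (κ ^ 2 * ∑ i, ∫ ω, |ζ i ω| ^ 3 ∂μ)) := by
      gcongr
      · exact hC.sum_integral_mul_mul_le hbdd
      · exact hC.sum_integral_mul_integral_le hbdd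
    _ = 3 * (∫ ω, (∑ i, ζ i ω) ^ 2 ∂μ) ^ 2 +
        15 * a * κ ^ 2 * ∑ i, ∫ ω, |ζ i ω| ^ 3 ∂μ := by ring

end FourthMoment

section Variance

variable [Fintype ι] [DecidableEq ι] {X : ι → Ω → ℝ} {A B C : ι → Finset ι} {κ : ℕ}

lemma LocalDependence.covariance_eq_zero (h : LocalDependence X A B C μ)
    (hX : ∀ i, MemLp (X i) 2 μ) {i j : ι} (hj : j ∉ A i) : cov[X i, X j; μ] = 0 := by
  have hind : IndepFun (X i) (X j) μ := (h.indepFun_self i).comp measurable_id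
    (measurable_pi_apply (⟨j, mem_compl.2 hj⟩ : ((A i)ᶜ : Finset ι)))
  exact hind.covariance_eq_zero (hX i) (hX j)

variable [IsProbabilityMeasure μ] {f g : Ω → ℝ}

lemma two_mul_covariance_le (hf : MemLp f 2 μ) (hg : MemLp g 2 μ) :
    2 * cov[f, g; μ] ≤ Var[f; μ] + Var[g; μ] := by
  linarith [variance_sub hf hg, variance_nonneg (f - g) μ]

lemma variance_sub_le (hf : MemLp f 2 μ) (hg : MemLp g 2 μ) :
    Var[fun ω ↦ f ω - g ω; μ] ≤ 2 * (Var[f; μ] + Var[g; μ]) := by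
  linarith [variance_fun_sub hf hg, variance_add hf hg, variance_nonneg (f + g) μ]

lemma integral_abs_sub_integral_le_sqrt_variance (hf : MemLp f 2 μ) :
    ∫ ω, |f ω - ∫ ω', f ω' ∂μ| ∂μ ≤ √Var[f; μ] := by
  set m := ∫ ω, f ω ∂μ
  have hfm : MemLp (fun ω ↦ |f ω - m|) 2 μ := (hf.sub (memLp_const m)).abs
  refine Real.le_sqrt_of_sq_le ?_
  have hjensen := abs_integral_pow_le 2 (hfm.integrable one_le_two)
    (by simpa only [sq_abs] using hfm.integrable_sq)
  simpa only [sq_abs, variance_eq_integral hf.aemeasurable] using hjensen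

lemma LocalDependence.variance_sum_le (h : LocalDependence X A B C μ) (hA : BoundedIncidence A κ)
    (hX : ∀ i, MemLp (X i) 2 μ) :
    Var[fun ω ↦ ∑ i, X i ω; μ] ≤ κ * ∑ i, ∫ ω, X i ω ^ 2 ∂μ := by
  have hvar_nonneg i : 0 ≤ Var[X i; μ] := variance_nonneg _ _
  calc
    Var[fun ω ↦ ∑ i, X i ω; μ] = ∑ i, ∑ j ∈ A i, cov[X i, X j; μ] := by
      rw [variance_fun_sum hX]
      exact sum_congr rfl fun i _ ↦
        (sum_subset (subset_univ _) fun j _ hj ↦ h.covariance_eq_zero hX hj).symm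
    _ ≤ ∑ i, ∑ j ∈ A i, (Var[X i; μ] + Var[X j; μ]) / 2 := by
      gcongr with i _ j _
      linarith [two_mul_covariance_le (hX i) (hX j)]
    _ = (∑ i, #(A i) * Var[X i; μ] + ∑ i, ∑ j ∈ A i, Var[X j; μ]) / 2 := by
      simp only [← sum_div, sum_add_distrib, sum_const, nsmul_eq_mul]
    _ ≤ (κ * ∑ i, Var[X i; μ] + κ * ∑ i, Var[X i; μ]) / 2 := by
      gcongr
      · exact hA.sum_card_mul_le hvar_nonneg
      · exact hA.sum_sum_le hvar_nonneg
    _ = κ * ∑ i, Var[X i; μ] := by ring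
    _ ≤ κ * ∑ i, ∫ ω, X i ω ^ 2 ∂μ := by
      gcongr with i
      exact variance_le_expectation_sq (hX i).1

end Variance

section Tails

variable {f W Y : Ω → ℝ}

lemma pow_mul_measureReal_le_integral_abs_pow [IsFiniteMeasure μ] {t : ℝ} (ht : 0 ≤ t) {n : ℕ}
    (hf : Integrable (fun ω ↦ |f ω| ^ n) μ) :
    t ^ n * μ.real {ω | t ≤ |f ω|} ≤ ∫ ω, |f ω| ^ n ∂μ := by
  calc
    t ^ n * μ.real {ω | t ≤ |f ω|} ≤ t ^ n * μ.real {ω | t ^ n ≤ |f ω| ^ n} :=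
      mul_le_mul_of_nonneg_left (measureReal_mono fun ω hω ↦ pow_le_pow_left₀ ht hω n)
        (by positivity)
    _ ≤ ∫ ω, |f ω| ^ n ∂μ :=
      mul_meas_ge_le_integral_of_nonneg (.of_forall fun ω ↦ by positivity) hf _

lemma measureReal_lt_add_measureReal_lt_neg [IsFiniteMeasure μ] (hY : AEMeasurable Y μ) {b : ℝ}
    (hb : 0 ≤ b) : μ.real {ω | b < Y ω} + μ.real {ω | Y ω < -b} = μ.real {ω | b < |Y ω|} := by
  have hdisj : Disjoint {ω | b < Y ω} {ω | Y ω < -b} :=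
    Set.disjoint_left.2 fun ω (h₁ : b < Y ω) (h₂ : Y ω < -b) ↦ by linarith
  rw [← measureReal_union₀ (nullMeasurableSet_lt hY aemeasurable_const) hdisj.aedisjoint]
  congr 1
  ext ω
  change b < Y ω ∨ Y ω < -b ↔ b < |Y ω|
  rw [lt_abs, lt_neg]

-- The passage from `W` to `W - Y` costs `{b < Y}` and the way back only `{Y < -b}`, so that
-- `P(b < |Y|)` appears with coefficient one.
lemma measureReal_inter_lt_le_of_indepFun [IsProbabilityMeasure μ] (hY : AEMeasurable Y μ)
    (hind : IndepFun f (fun ω ↦ W ω - Y ω) μ) {s : Set ℝ} (hs : MeasurableSet s) {b : ℝ}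
    (hb : 0 ≤ b) (z : ℝ) :
    μ.real (f ⁻¹' s ∩ {ω | z < W ω}) ≤
      μ.real {ω | b < |Y ω|} + μ.real (f ⁻¹' s) * μ.real {ω | z - 2 * b < W ω} := by
  have hupper : μ.real (f ⁻¹' s ∩ {ω | z < W ω}) ≤
      μ.real {ω | b < Y ω} + μ.real (f ⁻¹' s ∩ {ω | z - b < W ω - Y ω}) := by
    refine (measureReal_mono ?_).trans (measureReal_union_le _ _)
    rintro ω ⟨hfω, hzW : z < W ω⟩
    refine (lt_or_ge b (Y ω)).imp id fun hYb ↦ ⟨hfω, ?_⟩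
    change z - b < W ω - Y ω
    linarith
  have hlower : μ.real {ω | z - b < W ω - Y ω} ≤
      μ.real {ω | z - 2 * b < W ω} + μ.real {ω | Y ω < -b} := by
    refine (measureReal_mono fun ω (hω : z - b < W ω - Y ω) ↦ ?_).trans (measureReal_union_le _ _)
    refine (lt_or_ge (Y ω) (-b)).symm.imp (fun hYb ↦ ?_) id
    change z - 2 * b < W ω
    linarith
  have hprod : μ.real (f ⁻¹' s ∩ {ω | z - b < W ω - Y ω}) =
      μ.real (f ⁻¹' s) * μ.real {ω | z - b < W ω - Y ω} :=
    (congrArg ENNReal.toReal (hind.measure_inter_preimage_eq_mul s (Set.Ioi (z - b)) hs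
      measurableSet_Ioi)).trans ENNReal.toReal_mul
  have hs_le : μ.real (f ⁻¹' s) ≤ 1 := measureReal_le_one
  have hY_nonneg : 0 ≤ μ.real {ω | Y ω < -b} := measureReal_nonneg
  calc
    μ.real (f ⁻¹' s ∩ {ω | z < W ω})
      ≤ μ.real {ω | b < Y ω} +
          μ.real (f ⁻¹' s) * (μ.real {ω | z - 2 * b < W ω} + μ.real {ω | Y ω < -b}) := by
        rw [hprod] at hupper
        exact hupper.trans (by gcongr)
    _ ≤ μ.real {ω | b < Y ω} + μ.real {ω | Y ω < -b} +
          μ.real (f ⁻¹' s) * μ.real {ω | z - 2 * b < W ω} := by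
        nlinarith
    _ = μ.real {ω | b < |Y ω|} + μ.real (f ⁻¹' s) * μ.real {ω | z - 2 * b < W ω} := by
        rw [measureReal_lt_add_measureReal_lt_neg hY hb]

lemma measureReal_inter_lt_le_mul_of_indepFun [IsProbabilityMeasure μ] (hY : AEMeasurable Y μ)
    (hind : IndepFun f (fun ω ↦ W ω - Y ω) μ) {s : Set ℝ} (hs : MeasurableSet s) {b : ℝ}
    (hb : 0 ≤ b) (hYb : ∀ ω, |Y ω| ≤ b) (z : ℝ) :
    μ.real (f ⁻¹' s ∩ {ω | z < W ω}) ≤ μ.real (f ⁻¹' s) * μ.real {ω | z - 2 * b < W ω} := by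
  have hempty : {ω | b < |Y ω|} = ∅ := by simpa [Set.eq_empty_iff_forall_notMem] using hYb
  simpa [hempty] using measureReal_inter_lt_le_of_indepFun hY hind hs hb z

lemma measureReal_sub_le_sum_inter [IsFiniteMeasure μ] [Fintype ι] {s t : Set Ω} {E : ι → Set Ω}
    (hst : s \ ⋃ i, E i ⊆ t) : μ.real s - μ.real t ≤ ∑ i, μ.real (E i ∩ s) := by
  have hcover : s ⊆ t ∪ ⋃ i, E i ∩ s := by
    rw [← Set.iUnion_inter]
    tauto_set
  linarith [measureReal_mono hcover (μ := μ), measureReal_union_le (μ := μ) t (⋃ i, E i ∩ s),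
    measureReal_iUnion_fintype_le (μ := μ) fun i ↦ E i ∩ s]

variable [IsProbabilityMeasure μ] {V : Ω → ℝ} {z : ℝ}

lemma measureReal_lt_le_of_variance_sub_le (hVW : MemLp (fun ω ↦ W ω - V ω) 2 μ)
    (hmean : |∫ ω, (W ω - V ω) ∂μ| ≤ 1 / 16) (hvar : Var[fun ω ↦ W ω - V ω; μ] ≤ 1 / 128)
    (hz : 0 ≤ z) (hz' : z ≤ 29) :
    μ.real {ω | z - 1 / 4 < V ω} ≤ ((1 + z) ^ 3)⁻¹ + μ.real {ω | (z - 1) / 2 < W ω} := by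
  set m := ∫ ω, (W ω - V ω) ∂μ
  set t := z / 2 + 3 / 16 with ht
  have hint : Integrable (fun ω ↦ |W ω - V ω - m| ^ 2) μ := by
    simpa only [sq_abs, Pi.sub_apply] using (hVW.sub (memLp_const m)).integrable_sq
  have hcheb : t ^ 2 * μ.real {ω | t ≤ |W ω - V ω - m|} ≤ 1 / 128 := by
    refine (pow_mul_measureReal_le_integral_abs_pow (by positivity) hint).trans ?_
    simpa only [sq_abs, variance_eq_integral hVW.aemeasurable] using hvar
  have hcube : (1 + z) ^ 3 ≤ 128 * t ^ 2 := by
    -- `128 * t ^ 2 - (1 + z) ^ 3 = z ^ 2 * (29 - z) + 21 * z + 7 / 2` is the source of the cutoff.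
    have : 0 ≤ z ^ 2 * (29 - z) := mul_nonneg (sq_nonneg z) (by linarith)
    rw [ht]
    linarith
  have hdev : μ.real {ω | t ≤ |W ω - V ω - m|} ≤ ((1 + z) ^ 3)⁻¹ := by
    rw [← one_div, le_div_iff₀ (by positivity)]
    linarith [mul_le_mul_of_nonneg_left hcube
      (measureReal_nonneg (μ := μ) (s := {ω | t ≤ |W ω - V ω - m|}))]
  refine (measureReal_mono fun ω (hω : z - 1 / 4 < V ω) ↦ ?_).trans <|
    (measureReal_union_le {ω | t ≤ |W ω - V ω - m|} {ω | (z - 1) / 2 < W ω}).trans <| by gcongr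
  refine (lt_or_ge ((z - 1) / 2) (W ω)).symm.imp (fun hW ↦ ?_) id
  change t ≤ |W ω - V ω - m|
  linarith [abs_le.1 hmean, neg_le_abs (W ω - V ω - m)]

lemma measureReal_lt_le_of_integral_pow_four_le (hV : EssBounded V μ)
    (hmean : |∫ ω, V ω ∂μ| ≤ 1 / 16) {K : ℝ} (hfourth : ∫ ω, (V ω - ∫ ω', V ω' ∂μ) ^ 4 ∂μ ≤ 16 * K)
    (hz : 29 ≤ z) : μ.real {ω | z - 1 / 4 < V ω} ≤ K * ((1 + z) ^ 3)⁻¹ := by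
  set m := ∫ ω, V ω ∂μ
  set p := μ.real {ω | z - 1 / 4 < V ω}
  have hp : 0 ≤ p := measureReal_nonneg
  have hmarkov : (9 / 10 * (1 + z)) ^ 4 * p ≤ 16 * K := by
    calc
      (9 / 10 * (1 + z)) ^ 4 * p
        ≤ (9 / 10 * (1 + z)) ^ 4 * μ.real {ω | 9 / 10 * (1 + z) ≤ |V ω - m|} := by
          refine mul_le_mul_of_nonneg_left (measureReal_mono fun ω (hω : z - 1 / 4 < V ω) ↦ ?_)
            (by positivity)
          change 9 / 10 * (1 + z) ≤ |V ω - m|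
          linarith [abs_le.1 hmean, le_abs_self (V ω - m)]
      _ ≤ ∫ ω, |V ω - m| ^ 4 ∂μ :=
          pow_mul_measureReal_le_integral_abs_pow (by linarith)
            (by fun_prop : EssBounded _ μ).integrable
      _ ≤ 16 * K := by simpa only [Even.pow_abs (by decide : Even 4)] using hfourth
  rw [← div_eq_mul_inv, le_div_iff₀ (by positivity)]
  have : 16 * (1 + z) ^ 3 ≤ (9 / 10 * (1 + z)) ^ 4 := by
    have : 0 ≤ (1 + z) ^ 3 * (z - 29) := mul_nonneg (by positivity) (by linarith)
    have : 0 ≤ (1 + z) ^ 3 := by positivity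
    linarith
  nlinarith

end Tails

section Truncation

/-- Truncation of a real number at the closed level `|x| ≤ τ`, as for the variables `X̄ i`. The
cutoff of `ProbabilityTheory.truncation` is the half-open interval `(-τ, τ]` instead. -/
noncomputable def trunc (τ x : ℝ) : ℝ := if |x| ≤ τ then x else 0

variable {τ x : ℝ}

@[fun_prop]
lemma measurable_trunc (τ : ℝ) : Measurable (trunc τ) :=
  Measurable.ite (measurableSet_le (by fun_prop) measurable_const) measurable_id measurable_const

lemma abs_trunc_le (hτ : 0 ≤ τ) (x : ℝ) : |trunc τ x| ≤ τ := by
  unfold trunc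
  split_ifs with hx
  · exact hx
  · simpa using hτ

lemma trunc_eq_self (hx : |x| ≤ τ) : trunc τ x = x := if_pos hx

lemma sum_trunc_eq_of_forall_abs_le [Fintype ι] {x : ι → ℝ} (hx : ∀ i, |x i| ≤ τ) :
    ∑ i, trunc τ (x i) = ∑ i, x i :=
  sum_congr rfl fun i _ ↦ trunc_eq_self (hx i)

lemma abs_trunc_pow {n : ℕ} (hn : n ≠ 0) (τ x : ℝ) :
    |trunc τ x| ^ n = if |x| ≤ τ then |x| ^ n else 0 := by
  unfold trunc
  split_ifs <;> simp [hn]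

lemma sub_trunc_sq (τ x : ℝ) : (x - trunc τ x) ^ 2 = if τ < |x| then x ^ 2 else 0 := by
  simp only [trunc, ← not_le]
  split_ifs <;> simp

lemma le_abs_sub_trunc (hx : τ < |x|) : τ ≤ |x - trunc τ x| := by
  simpa only [trunc, if_neg hx.not_ge, sub_zero] using hx.le

lemma mul_abs_sub_trunc_le (τ x : ℝ) : τ * |x - trunc τ x| ≤ (x - trunc τ x) ^ 2 := by
  by_cases hx : |x| ≤ τ
  · simp [trunc_eq_self hx]
  · rw [← sq_abs, sq]
    gcongr
    exact le_abs_sub_trunc (not_le.1 hx)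

end Truncation

section TruncatedSum

variable [Fintype ι]

/-- The sum `β₂` of the second moments of the variables above the truncation level `τ`. -/
noncomputable def tailSecondMoment (X : ι → Ω → ℝ) (τ : ℝ) (μ : Measure Ω) : ℝ :=
  ∑ i, ∫ ω, (if τ < |X i ω| then X i ω ^ 2 else 0) ∂μ

/-- The sum `β₃` of the third absolute moments of the variables truncated at level `τ`. -/
noncomputable def truncThirdMoment (X : ι → Ω → ℝ) (τ : ℝ) (μ : Measure Ω) : ℝ :=
  ∑ i, ∫ ω, (if |X i ω| ≤ τ then |X i ω| ^ 3 else 0) ∂μ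

variable {X : ι → Ω → ℝ} {A B C : ι → Finset ι} {κ : ℕ} {τ : ℝ}

lemma tailSecondMoment_eq (X : ι → Ω → ℝ) (τ : ℝ) (μ : Measure Ω) :
    tailSecondMoment X τ μ = ∑ i, ∫ ω, (X i ω - trunc τ (X i ω)) ^ 2 ∂μ := by
  simp only [tailSecondMoment, sub_trunc_sq]

lemma truncThirdMoment_eq (X : ι → Ω → ℝ) (τ : ℝ) (μ : Measure Ω) :
    truncThirdMoment X τ μ = ∑ i, ∫ ω, |trunc τ (X i ω)| ^ 3 ∂μ := by
  simp only [truncThirdMoment, abs_trunc_pow three_ne_zero]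

lemma tailSecondMoment_nonneg (X : ι → Ω → ℝ) (τ : ℝ) (μ : Measure Ω) :
    0 ≤ tailSecondMoment X τ μ := by
  rw [tailSecondMoment_eq]
  positivity

lemma truncThirdMoment_nonneg (X : ι → Ω → ℝ) (τ : ℝ) (μ : Measure Ω) :
    0 ≤ truncThirdMoment X τ μ := by
  rw [truncThirdMoment_eq]
  positivity

lemma essBounded_trunc {f : Ω → ℝ} (hτ : 0 ≤ τ) (hf : AEMeasurable f μ) :
    EssBounded (fun ω ↦ trunc τ (f ω)) μ :=
  .of_abs_le (by fun_prop) fun _ ↦ abs_trunc_le hτ _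

lemma memLp_sub_trunc [IsFiniteMeasure μ] {f : Ω → ℝ} {p : ℝ≥0∞} (hτ : 0 ≤ τ) (hf : MemLp f p μ) :
    MemLp (fun ω ↦ f ω - trunc τ (f ω)) p μ :=
  hf.sub ((essBounded_trunc hτ hf.aemeasurable).memLp p)

section FiniteMeasure

variable [IsFiniteMeasure μ]

lemma sq_mul_sum_measureReal_le (hτ : 0 ≤ τ) (hX : ∀ i, MemLp (X i) 2 μ) :
    τ ^ 2 * ∑ i, μ.real {ω | τ < |X i ω|} ≤ tailSecondMoment X τ μ := by
  rw [tailSecondMoment_eq, mul_sum]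
  gcongr with i
  have hint : Integrable (fun ω ↦ |X i ω - trunc τ (X i ω)| ^ 2) μ := by
    simpa only [sq_abs] using (memLp_sub_trunc hτ (hX i)).integrable_sq
  calc
    τ ^ 2 * μ.real {ω | τ < |X i ω|}
      ≤ τ ^ 2 * μ.real {ω | τ ≤ |X i ω - trunc τ (X i ω)|} :=
        mul_le_mul_of_nonneg_left (measureReal_mono fun ω ↦ le_abs_sub_trunc) (sq_nonneg τ)
    _ ≤ ∫ ω, |X i ω - trunc τ (X i ω)| ^ 2 ∂μ := pow_mul_measureReal_le_integral_abs_pow hτ hint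
    _ = ∫ ω, (X i ω - trunc τ (X i ω)) ^ 2 ∂μ := by simp only [sq_abs]

lemma sum_measureReal_lt_abs_le {κ : ℝ} (hκτ : κ * τ = 1 / 8) (hτ : 0 ≤ τ)
    (hX : ∀ i, MemLp (X i) 2 μ) :
    ∑ i, μ.real {ω | τ < |X i ω|} ≤ 64 * κ ^ 2 * tailSecondMoment X τ μ := by
  set E := ∑ i, μ.real {ω | τ < |X i ω|}
  calc
    E = 64 * (κ * τ) ^ 2 * E := by
      rw [hκτ]
      ring
    _ = 64 * κ ^ 2 * (τ ^ 2 * E) := by ring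
    _ ≤ 64 * κ ^ 2 * tailSecondMoment X τ μ := by
      gcongr
      exact sq_mul_sum_measureReal_le hτ hX

lemma mul_abs_integral_sum_sub_trunc_le (hτ : 0 ≤ τ) (hX : ∀ i, MemLp (X i) 2 μ) :
    τ * |∫ ω, ∑ i, (X i ω - trunc τ (X i ω)) ∂μ| ≤ tailSecondMoment X τ μ := by
  have hexcess i := memLp_sub_trunc hτ (hX i)
  have hint i := (hexcess i).integrable one_le_two
  rw [tailSecondMoment_eq, integral_finsetSum _ fun i _ ↦ hint i]
  calc
    τ * |∑ i, ∫ ω, (X i ω - trunc τ (X i ω)) ∂μ|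
      ≤ τ * ∑ i, ∫ ω, |X i ω - trunc τ (X i ω)| ∂μ := by
        gcongr
        refine (abs_sum_le_sum_abs _ _).trans ?_
        gcongr
        exact abs_integral_le_integral_abs
    _ = ∑ i, ∫ ω, τ * |X i ω - trunc τ (X i ω)| ∂μ := by simp only [mul_sum, integral_const_mul]
    _ ≤ ∑ i, ∫ ω, (X i ω - trunc τ (X i ω)) ^ 2 ∂μ := sum_le_sum fun i _ ↦
        integral_mono ((hint i).abs.const_mul τ) (hexcess i).integrable_sq
          fun ω ↦ mul_abs_sub_trunc_le τ (X i ω)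

lemma mul_abs_integral_sum_trunc_le (hτ : 0 ≤ τ) (hX : ∀ i, MemLp (X i) 2 μ)
    (hmean : ∫ ω, ∑ i, X i ω ∂μ = 0) :
    τ * |∫ ω, ∑ i, trunc τ (X i ω) ∂μ| ≤ tailSecondMoment X τ μ := by
  have hint i := (hX i).integrable one_le_two
  have htrunc i := (essBounded_trunc hτ (hX i).aemeasurable).integrable
  have hsub := mul_abs_integral_sum_sub_trunc_le hτ hX
  simp only [sum_sub_distrib] at hsub
  rwa [integral_sub (integrable_finsetSum _ fun i _ ↦ hint i)
    (integrable_finsetSum _ fun i _ ↦ htrunc i), hmean, zero_sub, abs_neg] at hsub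

end FiniteMeasure

variable [IsProbabilityMeasure μ] [DecidableEq ι]

lemma LocalDependence.variance_sum_sub_trunc_le (h : LocalDependence X A B C μ)
    (hA : BoundedIncidence A κ) (hτ : 0 ≤ τ) (hX : ∀ i, MemLp (X i) 2 μ) :
    Var[fun ω ↦ ∑ i, (X i ω - trunc τ (X i ω)); μ] ≤ κ * tailSecondMoment X τ μ := by
  rw [tailSecondMoment_eq]
  exact (h.comp (φ := fun _ x ↦ x - trunc τ x) fun _ ↦ by fun_prop).variance_sum_le hA
    fun i ↦ memLp_sub_trunc hτ (hX i)

lemma LocalDependence.variance_sum_trunc_le (h : LocalDependence X A B C μ)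
    (hA : BoundedIncidence A κ) (hτ : 0 ≤ τ) (hX : ∀ i, MemLp (X i) 2 μ) :
    Var[fun ω ↦ ∑ i, trunc τ (X i ω); μ] ≤
      2 * (Var[fun ω ↦ ∑ i, X i ω; μ] + κ * tailSecondMoment X τ μ) := by
  have hsub := variance_sub_le (memLp_finsetSum univ fun i _ ↦ hX i)
    (memLp_finsetSum univ fun i _ ↦ memLp_sub_trunc hτ (hX i))
  simp only [← sum_sub_distrib, sub_sub_cancel] at hsub
  linarith [h.variance_sum_sub_trunc_le hA hτ hX]

lemma LocalDependence.integral_sum_trunc_sub_pow_four_le (h : LocalDependence X A B C μ)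
    (hC : BoundedIncidence C κ) (hτ : 0 ≤ τ) (hX : ∀ i, AEMeasurable (X i) μ) :
    ∫ ω, (∑ i, trunc τ (X i ω) - ∫ ω', ∑ i, trunc τ (X i ω') ∂μ) ^ 4 ∂μ ≤
      3 * Var[fun ω ↦ ∑ i, trunc τ (X i ω); μ] ^ 2 +
        120 * (√Var[fun ω ↦ ∑ i, trunc τ (X i ω); μ] + 5 * (κ * τ)) * κ ^ 2 *
          truncThirdMoment X τ μ := by
  set m : ι → ℝ := fun i ↦ ∫ ω, trunc τ (X i ω) ∂μ
  set v := Var[fun ω ↦ ∑ i, trunc τ (X i ω); μ]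
  have htrunc i : EssBounded (fun ω ↦ trunc τ (X i ω)) μ := essBounded_trunc hτ (hX i)
  have hm_le i : |m i| ≤ τ := by
    have hle ω : ‖trunc τ (X i ω)‖ ≤ τ := abs_trunc_le hτ _
    simpa using norm_integral_le_of_norm_le_const (μ := μ) (.of_forall hle)
  have hsum ω : ∑ i, (trunc τ (X i ω) - m i) =
      ∑ i, trunc τ (X i ω) - ∫ ω', ∑ i, trunc τ (X i ω') ∂μ := by
    rw [sum_sub_distrib, integral_finsetSum _ fun i _ ↦ (htrunc i).integrable]
  have hsq : ∫ ω, (∑ i, (trunc τ (X i ω) - m i)) ^ 2 ∂μ = v := by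
    simp only [hsum]
    exact (variance_eq_integral (by fun_prop : EssBounded _ μ).aemeasurable).symm
  have habs : ∫ ω, |∑ i, (trunc τ (X i ω) - m i)| ∂μ ≤ √v := by
    simp only [hsum]
    exact integral_abs_sub_integral_le_sqrt_variance ((by fun_prop : EssBounded _ μ).memLp 2)
  have hthird : ∑ i, ∫ ω, |trunc τ (X i ω) - m i| ^ 3 ∂μ ≤ 8 * truncThirdMoment X τ μ := by
    rw [truncThirdMoment_eq, mul_sum]
    gcongr with i
    refine (integral_abs_sub_integral_pow_le 3 (htrunc i).integrable
      (by fun_prop : EssBounded _ μ).integrable).trans_eq ?_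
    norm_num
  have hζ_mean i : ∫ ω, (trunc τ (X i ω) - m i) ∂μ = 0 := by
    rw [integral_sub (htrunc i).integrable (integrable_const _)]
    simp [m]
  have hζ_le i ω : |trunc τ (X i ω) - m i| ≤ 2 * τ := by
    linarith [abs_sub (trunc τ (X i ω)) (m i), abs_trunc_le hτ (X i ω), hm_le i]
  have hfourth := (h.comp (φ := fun i x ↦ trunc τ x - m i) fun _ ↦ by fun_prop
    ).integral_sum_pow_four_le hC (by fun_prop) hζ_mean (by positivity) hζ_le
  rw [hsq] at hfourth
  simp only [← hsum]
  calc
    ∫ ω, (∑ i, (trunc τ (X i ω) - m i)) ^ 4 ∂μ ≤ _ := hfourth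
    _ ≤ 3 * v ^ 2 + 15 * (√v + 5 / 2 * (κ * (2 * τ))) * κ ^ 2 * (8 * truncThirdMoment X τ μ) := by
      gcongr
    _ = 3 * v ^ 2 + 120 * (√v + 5 * (κ * τ)) * κ ^ 2 * truncThirdMoment X τ μ := by ring

lemma LocalDependence.integral_sum_trunc_sub_pow_four_le_of_variance_le
    (h : LocalDependence X A B C μ) (hC : BoundedIncidence C κ) (hτ : 0 ≤ τ) (hκτ : κ * τ ≤ 1 / 8)
    (hX : ∀ i, AEMeasurable (X i) μ) (hvar : Var[fun ω ↦ ∑ i, trunc τ (X i ω); μ] ≤ 9 / 4) :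
    ∫ ω, (∑ i, trunc τ (X i ω) - ∫ ω', ∑ i, trunc τ (X i ω') ∂μ) ^ 4 ∂μ ≤
      16 * (1 + 16 * κ ^ 2 * truncThirdMoment X τ μ) := by
  have hβ₃ := truncThirdMoment_nonneg X τ μ
  have hvar_nonneg := variance_nonneg (fun ω ↦ ∑ i, trunc τ (X i ω)) μ
  have hsqrt : √Var[fun ω ↦ ∑ i, trunc τ (X i ω); μ] ≤ 3 / 2 :=
    Real.sqrt_le_left (by norm_num) |>.2 (hvar.trans_eq (by norm_num))
  calc
    ∫ ω, (∑ i, trunc τ (X i ω) - ∫ ω', ∑ i, trunc τ (X i ω') ∂μ) ^ 4 ∂μ ≤ _ :=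
      h.integral_sum_trunc_sub_pow_four_le hC hτ hX
    _ ≤ 3 * (9 / 4) ^ 2 + 120 * (3 / 2 + 5 * (1 / 8)) * κ ^ 2 * truncThirdMoment X τ μ := by
      gcongr
    _ ≤ 16 * (1 + 16 * κ ^ 2 * truncThirdMoment X τ μ) := by
      have : 0 ≤ κ ^ 2 * truncThirdMoment X τ μ := by positivity
      linarith

lemma LocalDependence.measureReal_lt_sum_trunc_le (h : LocalDependence X A B C μ)
    (hC : BoundedIncidence C κ) (hX : ∀ i, MemLp (X i) 2 μ) (hmean : ∫ ω, ∑ i, X i ω ∂μ = 0)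
    (hsq : ∫ ω, (∑ i, X i ω) ^ 2 ∂μ ≤ 1) (hτ : 0 < τ) (hκτ : κ * τ = 1 / 8)
    (hβ₂ : tailSecondMoment X τ μ ≤ τ / 16) {z : ℝ} (hz : 0 ≤ z) :
    μ.real {ω | z - 1 / 4 < ∑ i, trunc τ (X i ω)} ≤
      (1 + 16 * κ ^ 2 * truncThirdMoment X τ μ) * ((1 + z) ^ 3)⁻¹ +
        μ.real {ω | (z - 1) / 2 < ∑ i, X i ω} := by
  have hA : BoundedIncidence A κ := hC.mono fun i ↦ (h.left_subset i).trans (h.mid_subset i)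
  have hβ₃ := truncThirdMoment_nonneg X τ μ
  have hκβ₂ : κ * tailSecondMoment X τ μ ≤ 1 / 128 := by
    linarith [mul_le_mul_of_nonneg_left hβ₂ κ.cast_nonneg]
  have hbound {a : ℝ} (ha : τ * a ≤ tailSecondMoment X τ μ) : a ≤ 1 / 16 :=
    le_of_mul_le_mul_left (by linarith) hτ
  -- The `z ^ (-2)` decay from Chebyshev's inequality is compensated by the small variance `1 / 128`
  -- only for bounded `z`; beyond that the decay has to come from the fourth moment.
  obtain hz' | hz' := le_total z 29
  · have htail := measureReal_lt_le_of_variance_sub_le (μ := μ)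
      (W := fun ω ↦ ∑ i, X i ω) (V := fun ω ↦ ∑ i, trunc τ (X i ω)) (z := z)
    simp only [← sum_sub_distrib] at htail
    refine (htail (memLp_finsetSum _ fun i _ ↦ memLp_sub_trunc hτ.le (hX i))
      (hbound (mul_abs_integral_sum_sub_trunc_le hτ.le hX))
      ((h.variance_sum_sub_trunc_le hA hτ.le hX).trans hκβ₂) hz hz').trans ?_
    gcongr
    exact le_mul_of_one_le_left (by positivity) (le_add_of_nonneg_right (by positivity))
  · have hvar : Var[fun ω ↦ ∑ i, X i ω; μ] ≤ 1 :=
      (variance_le_expectation_sq (memLp_finsetSum _ fun i _ ↦ hX i).1).trans hsq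
    have hvar_trunc : Var[fun ω ↦ ∑ i, trunc τ (X i ω); μ] ≤ 9 / 4 := by
      linarith [h.variance_sum_trunc_le hA hτ.le hX]
    refine le_add_of_le_of_nonneg ?_ measureReal_nonneg
    have htrunc i := essBounded_trunc hτ.le (hX i).aemeasurable
    exact measureReal_lt_le_of_integral_pow_four_le (by fun_prop)
      (hbound (mul_abs_integral_sum_trunc_le hτ.le hX hmean))
      (h.integral_sum_trunc_sub_pow_four_le_of_variance_le hC hτ.le hκτ.le
        (fun i ↦ (hX i).aemeasurable) hvar_trunc) hz'

lemma LocalDependence.measureReal_sum_sub_measureReal_sum_trunc_le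
    (h : LocalDependence X A B C μ) (hX : ∀ i, AEMeasurable (X i) μ) {b : ℝ} (hb : 0 ≤ b) (z : ℝ) :
    μ.real {ω | z < ∑ i, X i ω} - μ.real {ω | z < ∑ i, trunc τ (X i ω)} ≤
      ∑ i, μ.real {ω | b < |∑ j ∈ A i, X j ω|} +
        (∑ i, μ.real {ω | τ < |X i ω|}) * μ.real {ω | z - 2 * b < ∑ i, X i ω} := by
  rw [sum_mul, ← sum_add_distrib]
  refine (measureReal_sub_le_sum_inter (E := fun i ↦ {ω | τ < |X i ω|}) ?_).trans <|
    sum_le_sum fun i _ ↦ measureReal_inter_lt_le_of_indepFun (s := {x | τ < |x|}) (by fun_prop)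
      (h.indepFun_sum_comp_sub i fun _ ↦ measurable_id)
      (measurableSet_lt measurable_const measurable_abs) hb z
  rintro ω ⟨hzω : z < ∑ i, X i ω, hω⟩
  have hle i : |X i ω| ≤ τ := not_lt.1 fun hi ↦ hω (Set.mem_iUnion_of_mem i hi)
  change z < ∑ i, trunc τ (X i ω)
  rwa [sum_trunc_eq_of_forall_abs_le hle]

lemma LocalDependence.measureReal_sum_trunc_sub_measureReal_sum_le
    (h : LocalDependence X A B C μ) (hA : BoundedIncidence A κ) (hτ : 0 ≤ τ)
    (hX : ∀ i, AEMeasurable (X i) μ) (z : ℝ) :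
    μ.real {ω | z < ∑ i, trunc τ (X i ω)} - μ.real {ω | z < ∑ i, X i ω} ≤
      (∑ i, μ.real {ω | τ < |X i ω|}) *
        μ.real {ω | z - 2 * (κ * τ) < ∑ i, trunc τ (X i ω)} := by
  have hlocal i ω : |∑ j ∈ A i, trunc τ (X j ω)| ≤ κ * τ :=
    (abs_sum_le_sum_abs _ _).trans (hA.sum_le i hτ fun j ↦ abs_trunc_le hτ _)
  rw [sum_mul]
  refine (measureReal_sub_le_sum_inter (E := fun i ↦ {ω | τ < |X i ω|}) ?_).trans <|
    sum_le_sum fun i _ ↦ measureReal_inter_lt_le_mul_of_indepFun (s := {x | τ < |x|})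
      (Y := fun ω ↦ ∑ j ∈ A i, trunc τ (X j ω)) (by fun_prop)
      (h.indepFun_sum_comp_sub i fun _ ↦ by fun_prop)
      (measurableSet_lt measurable_const measurable_abs) (by positivity) (hlocal i) z
  rintro ω ⟨hzω : z < ∑ i, trunc τ (X i ω), hω⟩
  have hle i : |X i ω| ≤ τ := not_lt.1 fun hi ↦ hω (Set.mem_iUnion_of_mem i hi)
  change z < ∑ i, X i ω
  rwa [← sum_trunc_eq_of_forall_abs_le hle]

lemma truncation_error_le {κ β₂ β₃ p q : ℝ} (hκτ : κ * τ = 1 / 8)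
    (hβ₂ : β₂ ≤ τ / 16) (hβ₃ : 0 ≤ β₃) (hq : 0 ≤ q) :
    64 * κ ^ 2 * β₂ * ((1 + 16 * κ ^ 2 * β₃) * q + p) ≤
      8 * q * κ ^ 3 * β₃ + 64 * κ ^ 2 * β₂ * (q + p) := by
  calc
    64 * κ ^ 2 * β₂ * ((1 + 16 * κ ^ 2 * β₃) * q + p)
      = 1024 * κ ^ 4 * β₃ * q * β₂ + 64 * κ ^ 2 * β₂ * (q + p) := by ring
    _ ≤ 1024 * κ ^ 4 * β₃ * q * (τ / 16) + 64 * κ ^ 2 * β₂ * (q + p) := by gcongr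
    _ = 64 * (κ * τ) * q * κ ^ 3 * β₃ + 64 * κ ^ 2 * β₂ * (q + p) := by ring
    _ = 8 * q * κ ^ 3 * β₃ + 64 * κ ^ 2 * β₂ * (q + p) := by
      rw [hκτ]
      ring

theorem stmt_17_general (h : LocalDependence X A B C μ) (hC : BoundedIncidence C κ)
    (hX : ∀ i, MemLp (X i) 2 μ) (hmean : ∫ ω, ∑ i, X i ω ∂μ = 0)
    (hsq : ∫ ω, (∑ i, X i ω) ^ 2 ∂μ ≤ 1) (hκτ : κ * τ = 1 / 8)
    (hβ₂ : tailSecondMoment X τ μ ≤ τ / 16) {z : ℝ} (hz : 0 ≤ z) :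
    |μ.real {ω | z < ∑ i, X i ω} - μ.real {ω | z < ∑ i, trunc τ (X i ω)}| ≤
      ∑ i, μ.real {ω | (z + 1) / 4 < |∑ j ∈ A i, X j ω|} +
        8 * ((z + 1) ^ 3)⁻¹ * κ ^ 3 * truncThirdMoment X τ μ +
        64 * κ ^ 2 * tailSecondMoment X τ μ *
          (((1 + z) ^ 3)⁻¹ + μ.real {ω | (z - 1) / 2 < ∑ i, X i ω}) := by
  set β₂ := tailSecondMoment X τ μ
  set β₃ := truncThirdMoment X τ μ
  set p := μ.real {ω | (z - 1) / 2 < ∑ i, X i ω}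
  have hτ : 0 < τ := by nlinarith [κ.cast_nonneg (α := ℝ)]
  have hA : BoundedIncidence A κ := hC.mono fun i ↦ (h.left_subset i).trans (h.mid_subset i)
  have hmeas i := (hX i).aemeasurable
  have hβ₂_nonneg : 0 ≤ β₂ := tailSecondMoment_nonneg X τ μ
  have hβ₃_nonneg : 0 ≤ β₃ := truncThirdMoment_nonneg X τ μ
  have hp_nonneg : 0 ≤ p := measureReal_nonneg
  have hE := sum_measureReal_lt_abs_le hκτ hτ.le hX
  rw [add_comm z 1, abs_sub_le_iff]
  constructor
  · refine (h.measureReal_sum_sub_measureReal_sum_trunc_le hmeas (b := (1 + z) / 4)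
      (by positivity) z).trans ?_
    rw [show z - 2 * ((1 + z) / 4) = (z - 1) / 2 by ring, add_assoc]
    gcongr
    refine (mul_le_mul_of_nonneg_right hE hp_nonneg).trans <|
      le_add_of_nonneg_of_le (by positivity) ?_
    gcongr
    exact le_add_of_nonneg_left (by positivity)
  · have hF_nonneg : 0 ≤ ∑ i, μ.real {ω | (1 + z) / 4 < |∑ j ∈ A i, X j ω|} :=
      sum_nonneg fun i _ ↦ measureReal_nonneg
    refine (h.measureReal_sum_trunc_sub_measureReal_sum_le hA hτ.le hmeas z).trans ?_
    rw [hκτ, show z - 2 * (1 / 8) = z - 1 / 4 by ring]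
    calc
      _ ≤ 64 * κ ^ 2 * β₂ * ((1 + 16 * κ ^ 2 * β₃) * ((1 + z) ^ 3)⁻¹ + p) := by
        gcongr
        exact h.measureReal_lt_sum_trunc_le hC hX hmean hsq hτ hκτ hβ₂ hz
      _ ≤ _ := by
        linarith [truncation_error_le (β₂ := β₂) (β₃ := β₃) (p := p) (q := ((1 + z) ^ 3)⁻¹)
          hκτ hβ₂ hβ₃_nonneg (by positivity)]

end TruncatedSum

end

theorem stmt_17 :
    ∃ C : ℝ, 0 < C ∧
    ∀ (Ω : Type) [MeasurableSpace Ω] (μ : Measure Ω) [IsProbabilityMeasure μ]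
      (ι : Type) [Fintype ι] [DecidableEq ι]
      (X : ι → Ω → ℝ) (A B Bstar Cstar Dstar : ι → Finset ι),
      (∀ i, Measurable (X i)) →
      (∀ i, ∫ ω, X i ω ∂μ = 0) →
      (∀ i, Integrable (fun ω => (X i ω) ^ 2) μ) →
      (∀ i, i ∈ A i) → (∀ i, A i ⊆ B i) → (∀ i, B i ⊆ Bstar i) →
      (∀ i, Bstar i ⊆ Cstar i) → (∀ i, Cstar i ⊆ Dstar i) →
      (∀ i, IndepFun (X i) (fun ω => fun j : ((A i)ᶜ : Finset ι) => X j.1 ω) μ) →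
      (∀ i, IndepFun (fun ω => fun j : (A i : Finset ι) => X j.1 ω)
        (fun ω => fun j : ((B i)ᶜ : Finset ι) => X j.1 ω) μ) →
      (∀ i, IndepFun (fun ω => fun j : (A i : Finset ι) => X j.1 ω)
        (fun ω => fun l : ((Bstar i)ᶜ : Finset ι) =>
          fun j : (A l.1 : Finset ι) => X j.1 ω) μ) →
      (∀ i, IndepFun (fun ω => fun l : (Bstar i : Finset ι) =>
          fun j : (A l.1 : Finset ι) => X j.1 ω)
        (fun ω => fun l : ((Cstar i)ᶜ : Finset ι) =>
          fun j : (A l.1 : Finset ι) => X j.1 ω) μ) →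
      (∀ i, IndepFun (fun ω => fun l : (Cstar i : Finset ι) =>
          fun j : (A l.1 : Finset ι) => X j.1 ω)
        (fun ω => fun l : ((Dstar i)ᶜ : Finset ι) =>
          fun j : (A l.1 : Finset ι) => X j.1 ω) μ) →
    ∀ (W : Ω → ℝ), (∀ ω, W ω = ∑ i, X i ω) →
      (∫ ω, (W ω) ^ 2 ∂μ) = 1 →
    ∀ (κ : ℕ), (κ = Finset.univ.sup fun i => max (Dstar i).card
        (Finset.univ.filter fun j => i ∈ Dstar j).card) →
    ∀ (τ : ℝ), τ = 1 / (8 * (κ : ℝ)) →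
    ∀ (Wbar : Ω → ℝ),
      (∀ ω, Wbar ω = ∑ i, (if |X i ω| ≤ τ then X i ω else 0)) →
    ∀ (Y : ι → Ω → ℝ), (∀ i ω, Y i ω = ∑ j ∈ A i, X j ω) →
    ∀ (β₂ β₃ : ℝ),
      (β₂ = ∑ i, ∫ ω, (if τ < |X i ω| then (X i ω) ^ 2 else 0) ∂μ) →
      (β₃ = ∑ i, ∫ ω, (if |X i ω| ≤ τ then |X i ω| ^ 3 else 0) ∂μ) →
      β₂ ≤ τ / 16 →
    ∀ z : ℝ, 0 ≤ z →
      |(μ {ω | z < W ω}).toReal - (μ {ω | z < Wbar ω}).toReal| ≤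
        (∑ i, (μ {ω | (z + 1) / 4 < |Y i ω|}).toReal) +
          C * ((z + 1) ^ 3)⁻¹ * (κ : ℝ) ^ 3 * β₃ +
          64 * (κ : ℝ) ^ 2 * β₂ *
            (((1 + z) ^ 3)⁻¹ + (μ {ω | (z - 1) / 2 < W ω}).toReal) := by
  refine ⟨8, by norm_num, ?_⟩
  intro Ω _ μ _ ι _ _ X A B Bstar Cstar Dstar hX hX_mean hX_sq hA hAB hBBstar hBstarCstar
    hCstarDstar hself hleft _ hmid _ W hW hW_sq κ hκ τ hτ Wbar hWbar Y hY β₂ β₃ hβ₂ hβ₃ hβ₂_le z hz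
  obtain rfl : W = fun ω ↦ ∑ i, X i ω := funext hW
  obtain rfl : Wbar = fun ω ↦ ∑ i, trunc τ (X i ω) := funext hWbar
  obtain rfl : Y = fun i ω ↦ ∑ j ∈ A i, X j ω := funext₂ hY
  have hBCstar i := (hBBstar i).trans (hBstarCstar i)
  have hLD : LocalDependence X A B Cstar μ := ⟨hA, hAB, hBCstar, hself, hleft,
    fun i ↦ indepFun_restrict_of_nested hA (hBBstar i) (hmid i)⟩
  have hDstar : BoundedIncidence Dstar κ := hκ ▸ boundedIncidence_sup Dstar
  have hX_memLp i : MemLp (X i) 2 μ :=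
    (memLp_two_iff_integrable_sq (hX i).aestronglyMeasurable).2 (hX_sq i)
  have hmean : ∫ ω, ∑ i, X i ω ∂μ = 0 := by
    rw [integral_finsetSum _ fun i _ ↦ (hX_memLp i).integrable one_le_two]
    exact Finset.sum_eq_zero fun i _ ↦ hX_mean i
  have hκ_pos : 0 < κ := by
    obtain ⟨i⟩ : Nonempty ι := by
      by_contra! hι
      simp at hW_sq
    exact hDstar.pos_of_mem (hCstarDstar i (hBCstar i (hAB i (hA i))))
  subst hβ₂ hβ₃
  exact stmt_17_general hLD (hDstar.mono hCstarDstar) hX_memLp hmean hW_sq.le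
    (by rw [hτ]; field_simp) hβ₂_le hz
end

section
/- For every real w ≥ 0, 0 ≤ √(2π) (1 + w²) e^{w²/2} (1 − Φ(w)) − w ≤ 2/(1 + w³). -/
open MeasureTheory Real

noncomputable def stdGaussianCDF : ℝ → ℝ :=
  fun z => ∫ x in Set.Iic z, (Real.sqrt (2 * Real.pi))⁻¹ * Real.exp (-x ^ 2 / 2)

/-!
The Mills ratio `m w = e^{w²/2} ∫_w^∞ e^{-x²/2} dx` solves `m' = w m - 1`. Since
`(g e^{-w²/2})' = (g' - w g) e^{-w²/2}`, a nonnegative `g` with `1 ≤ w g - g'` (a supersolution)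
lies above `m`, and a bounded `g` with `w g - g' ≤ 1` (a subsolution) lies below it. Here
`w / (1 + w²)` is a subsolution, and `(w + 2 / (w³ + 3w + 1)) / (1 + w²)` is a supersolution as long
as its inner denominator is positive: with `w³ + 3w + c` for that denominator, the inequality to
check is `c (w³ + 3w + c) ≤ 3 (1 + w²)²`, which holds for `c = 1`.
-/

open Filter Set
open scoped Topology

section ImproperComparison

variable {f G G' : ℝ → ℝ} {a l : ℝ}

theorem integral_Ioi_le_sub_of_hasDeriv_right_of_le (hcont : ContinuousOn G (Ici a))
    (hderiv : ∀ x ∈ Ioi a, HasDerivWithinAt G (G' x) (Ioi x) x) (hf : IntegrableOn f (Ioi a))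
    (hle : ∀ x ∈ Ioi a, f x ≤ G' x) (hl : ∀ᶠ x in atTop, G x ≤ l) :
    ∫ x in Ioi a, f x ≤ l - G a := by
  refine le_of_tendsto (intervalIntegral_tendsto_integral_Ioi a hf tendsto_id) ?_
  filter_upwards [hl, eventually_ge_atTop a] with b hb hab
  calc ∫ x in a..b, f x
      ≤ G b - G a := intervalIntegral.integral_le_sub_of_hasDeriv_right_of_le hab
        (hcont.mono Icc_subset_Ici_self) (fun x hx ↦ hderiv x hx.1)
        (((integrableOn_Ici_iff_integrableOn_Ioi).2 hf).mono_set Icc_subset_Ici_self)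
        fun x hx ↦ hle x hx.1
    _ ≤ l - G a := by gcongr

theorem sub_le_integral_Ioi_of_hasDeriv_right_of_le (hcont : ContinuousOn G (Ici a))
    (hderiv : ∀ x ∈ Ioi a, HasDerivWithinAt G (G' x) (Ioi x) x) (hf : IntegrableOn f (Ioi a))
    (hle : ∀ x ∈ Ioi a, G' x ≤ f x) (hl : Tendsto G atTop (𝓝 l)) :
    l - G a ≤ ∫ x in Ioi a, f x := by
  refine le_of_tendsto_of_tendsto (hl.sub_const (G a))
    (intervalIntegral_tendsto_integral_Ioi a hf tendsto_id) ?_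
  filter_upwards [eventually_ge_atTop a] with b hab
  exact intervalIntegral.sub_le_integral_of_hasDeriv_right_of_le hab
    (hcont.mono Icc_subset_Ici_self) (fun x hx ↦ hderiv x hx.1)
    (((integrableOn_Ici_iff_integrableOn_Ioi).2 hf).mono_set Icc_subset_Ici_self)
    fun x hx ↦ hle x hx.1

end ImproperComparison

section GaussianWeight

theorem integrable_exp_neg_sq_div_two : Integrable fun x : ℝ ↦ exp (-x ^ 2 / 2) := by
  convert integrable_exp_neg_mul_sq (b := 1 / 2) (by norm_num) using 3
  ring

theorem integral_exp_neg_sq_div_two : ∫ x : ℝ, exp (-x ^ 2 / 2) = √(2 * π) := by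
  convert integral_gaussian (1 / 2) using 4 <;> ring

theorem tendsto_exp_neg_sq_div_two_atTop :
    Tendsto (fun x : ℝ ↦ exp (-x ^ 2 / 2)) atTop (𝓝 0) :=
  tendsto_exp_atBot.comp <|
    (tendsto_neg_atTop_atBot.comp (tendsto_pow_atTop two_ne_zero)).atBot_div_const two_pos

theorem hasDerivAt_neg_mul_exp_neg_sq_div_two {g : ℝ → ℝ} {g' x : ℝ} (hg : HasDerivAt g g' x) :
    HasDerivAt (fun y ↦ -(g y * exp (-y ^ 2 / 2))) ((x * g x - g') * exp (-x ^ 2 / 2)) x := by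
  have hexponent : HasDerivAt (fun y : ℝ ↦ -y ^ 2 / 2) (-x) x :=
    ((hasDerivAt_pow 2 x).neg.div_const 2).congr_deriv (by norm_num; ring)
  exact (hg.mul hexponent.exp).neg.congr_deriv (by ring)

end GaussianWeight

/-- The Mills ratio `(1 - Φ w) / φ w` of the standard normal distribution, with the normalizing
constants of `Φ` and of its density `φ` cancelled. -/
noncomputable def millsRatio (w : ℝ) : ℝ :=
  exp (w ^ 2 / 2) * ∫ x in Ioi w, exp (-x ^ 2 / 2)

theorem sqrt_two_pi_mul_one_sub_stdGaussianCDF (w : ℝ) :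
    √(2 * π) * (1 - stdGaussianCDF w) = ∫ x in Ioi w, exp (-x ^ 2 / 2) := by
  have hsplit := intervalIntegral.integral_Iic_add_Ioi (b := w)
    integrable_exp_neg_sq_div_two.integrableOn integrable_exp_neg_sq_div_two.integrableOn
  have hsqrt : √(2 * π) ≠ 0 := by positivity
  rw [integral_exp_neg_sq_div_two] at hsplit
  rw [stdGaussianCDF, integral_const_mul, mul_sub, mul_inv_cancel_left₀ hsqrt]
  linarith

theorem exp_mul_mul_exp_neg_sq_div_two (w y : ℝ) :
    exp (w ^ 2 / 2) * (y * exp (-w ^ 2 / 2)) = y := by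
  rw [mul_left_comm, ← exp_add, neg_div, add_neg_cancel, exp_zero, mul_one]

section Comparison

variable {g g' : ℝ → ℝ} {w : ℝ}

theorem millsRatio_le_of_hasDerivAt (hg : ∀ x ∈ Ici w, HasDerivAt g (g' x) x)
    (hsuper : ∀ x ∈ Ici w, 1 ≤ x * g x - g' x) (hnonneg : ∀ᶠ x in atTop, 0 ≤ g x) :
    millsRatio w ≤ g w := by
  have hderiv x (hx : x ∈ Ici w) := hasDerivAt_neg_mul_exp_neg_sq_div_two (hg x hx)
  have htail : ∫ x in Ioi w, exp (-x ^ 2 / 2) ≤ 0 - -(g w * exp (-w ^ 2 / 2)) :=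
    integral_Ioi_le_sub_of_hasDeriv_right_of_le
      (fun x hx ↦ (hderiv x hx).continuousAt.continuousWithinAt)
      (fun x hx ↦ (hderiv x (Ioi_subset_Ici_self hx)).hasDerivWithinAt)
      integrable_exp_neg_sq_div_two.integrableOn
      (fun x hx ↦ le_mul_of_one_le_left (exp_nonneg _) (hsuper x (Ioi_subset_Ici_self hx)))
      (hnonneg.mono fun x hx ↦ neg_nonpos.2 (mul_nonneg hx (exp_nonneg _)))
  rw [zero_sub, neg_neg] at htail
  calc millsRatio w ≤ exp (w ^ 2 / 2) * (g w * exp (-w ^ 2 / 2)) := by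
        unfold millsRatio; gcongr
    _ = g w := exp_mul_mul_exp_neg_sq_div_two w (g w)

theorem le_millsRatio_of_hasDerivAt (hg : ∀ x ∈ Ici w, HasDerivAt g (g' x) x)
    (hsub : ∀ x ∈ Ici w, x * g x - g' x ≤ 1)
    (hbounded : IsBoundedUnder (· ≤ ·) atTop fun x ↦ ‖g x‖) :
    g w ≤ millsRatio w := by
  have hderiv x (hx : x ∈ Ici w) := hasDerivAt_neg_mul_exp_neg_sq_div_two (hg x hx)
  have hlim : Tendsto (fun x ↦ -(g x * exp (-x ^ 2 / 2))) atTop (𝓝 0) := by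
    simpa only [neg_zero] using
      (isBoundedUnder_le_mul_tendsto_zero hbounded tendsto_exp_neg_sq_div_two_atTop).neg
  have htail : 0 - -(g w * exp (-w ^ 2 / 2)) ≤ ∫ x in Ioi w, exp (-x ^ 2 / 2) :=
    sub_le_integral_Ioi_of_hasDeriv_right_of_le
      (fun x hx ↦ (hderiv x hx).continuousAt.continuousWithinAt)
      (fun x hx ↦ (hderiv x (Ioi_subset_Ici_self hx)).hasDerivWithinAt)
      integrable_exp_neg_sq_div_two.integrableOn
      (fun x hx ↦ mul_le_of_le_one_left (exp_nonneg _) (hsub x (Ioi_subset_Ici_self hx))) hlim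
  rw [zero_sub, neg_neg] at htail
  calc g w = exp (w ^ 2 / 2) * (g w * exp (-w ^ 2 / 2)) :=
        (exp_mul_mul_exp_neg_sq_div_two w (g w)).symm
    _ ≤ millsRatio w := by unfold millsRatio; gcongr

end Comparison

theorem hasDerivAt_div_one_add_sq {p : ℝ → ℝ} {p' x : ℝ} (hp : HasDerivAt p p' x) :
    HasDerivAt (fun y ↦ p y / (1 + y ^ 2))
      ((p' * (1 + x ^ 2) - p x * (2 * x)) / (1 + x ^ 2) ^ 2) x :=
  (hp.div ((hasDerivAt_pow 2 x).const_add 1) (by positivity)).congr_deriv (by norm_num)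

theorem mul_div_one_add_sq_sub_deriv (x p p' : ℝ) :
    x * (p / (1 + x ^ 2)) - (p' * (1 + x ^ 2) - p * (2 * x)) / (1 + x ^ 2) ^ 2 =
      ((x ^ 3 + 3 * x) * p - (1 + x ^ 2) * p') / (1 + x ^ 2) ^ 2 := by
  field_simp
  ring

theorem div_one_add_sq_le_millsRatio (w : ℝ) : w / (1 + w ^ 2) ≤ millsRatio w := by
  refine le_millsRatio_of_hasDerivAt
    (fun x _ ↦ hasDerivAt_div_one_add_sq (hasDerivAt_id x)) (fun x _ ↦ ?_) ?_
  · rw [id, mul_div_one_add_sq_sub_deriv, div_le_one (by positivity)]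
    linarith
  · refine isBoundedUnder_of ⟨1, fun x ↦ ?_⟩
    change |x / (1 + x ^ 2)| ≤ 1
    rw [abs_div, abs_of_pos (by positivity : 0 < 1 + x ^ 2), div_le_one (by positivity), ← sq_abs x]
    nlinarith [sq_nonneg (|x| - 1)]

-- The supersolution inequality for `(x + 2 / (x³ + 3x + 1)) / (1 + x²)`, times `(1 + x²)²`.
theorem one_add_sq_sq_le_of_cubic_pos {x : ℝ} (hpos : 0 < x ^ 3 + 3 * x + 1) :
    (1 + x ^ 2) ^ 2 ≤ (x ^ 3 + 3 * x) * (x + 2 / (x ^ 3 + 3 * x + 1)) -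
      (1 + x ^ 2) * (1 - 2 * (3 * x ^ 2 + 3) / (x ^ 3 + 3 * x + 1) ^ 2) := by
  obtain ⟨q, hq⟩ : ∃ q, q = x ^ 3 + 3 * x + 1 := ⟨_, rfl⟩
  rw [← hq] at hpos ⊢
  have hquartic : 0 ≤ 3 * (1 + x ^ 2) ^ 2 - q := by
    nlinarith [sq_nonneg (x ^ 2 - x), sq_nonneg (x - 1)]
  calc (1 + x ^ 2) ^ 2
      ≤ (1 + x ^ 2) ^ 2 + 2 * (3 * (1 + x ^ 2) ^ 2 - q) / q ^ 2 :=
        le_add_of_nonneg_right (by positivity)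
    _ = x * (x ^ 3 + 3 * x) + (q - 1) * (2 / q)
          - (1 + x ^ 2) * (1 - 2 * (3 * x ^ 2 + 3) / q ^ 2) := by
        field_simp
        ring
    _ = _ := by
        rw [show q - 1 = x ^ 3 + 3 * x by rw [hq]; ring]
        ring

theorem millsRatio_le_of_cubic_pos {w : ℝ} (hw : 0 < w ^ 3 + 3 * w + 1) :
    millsRatio w ≤ (w + 2 / (w ^ 3 + 3 * w + 1)) / (1 + w ^ 2) := by
  have hq (x : ℝ) (hx : x ∈ Ici w) : 0 < x ^ 3 + 3 * x + 1 := by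
    have hcube : w ^ 3 ≤ x ^ 3 := (Odd.pow_le_pow (by decide)).2 hx
    linarith [mem_Ici.1 hx]
  have hderiv (x : ℝ) (hx : x ∈ Ici w) : HasDerivAt (fun y ↦ y + 2 / (y ^ 3 + 3 * y + 1))
      (1 - 2 * (3 * x ^ 2 + 3) / (x ^ 3 + 3 * x + 1) ^ 2) x := by
    have hq' : HasDerivAt (fun y : ℝ ↦ y ^ 3 + 3 * y + 1) (3 * x ^ 2 + 3) x := by
      simpa using ((hasDerivAt_pow 3 x).add ((hasDerivAt_id x).const_mul 3)).add_const 1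
    exact ((hasDerivAt_id x).add ((hasDerivAt_const x 2).div hq' (hq x hx).ne')).congr_deriv
      (by ring)
  refine millsRatio_le_of_hasDerivAt (fun x hx ↦ hasDerivAt_div_one_add_sq (hderiv x hx))
    (fun x hx ↦ ?_) ?_
  · rw [mul_div_one_add_sq_sub_deriv, one_le_div (by positivity)]
    exact one_add_sq_sq_le_of_cubic_pos (hq x hx)
  · filter_upwards [eventually_ge_atTop 0] with x hx
    positivity

theorem stmt_19 :
    ∀ w : ℝ, 0 ≤ w →
      0 ≤ Real.sqrt (2 * Real.pi) * (1 + w ^ 2) * Real.exp (w ^ 2 / 2) *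
            (1 - stdGaussianCDF w) - w ∧
      Real.sqrt (2 * Real.pi) * (1 + w ^ 2) * Real.exp (w ^ 2 / 2) *
            (1 - stdGaussianCDF w) - w ≤ 2 / (1 + w ^ 3) := by
  intro w hw
  have hmills : √(2 * π) * (1 + w ^ 2) * exp (w ^ 2 / 2) * (1 - stdGaussianCDF w) =
      millsRatio w * (1 + w ^ 2) := by
    rw [millsRatio, ← sqrt_two_pi_mul_one_sub_stdGaussianCDF]
    ring
  have hpos : 0 < 1 + w ^ 2 := by positivity
  have hlower : w ≤ millsRatio w * (1 + w ^ 2) :=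
    (div_le_iff₀ hpos).1 (div_one_add_sq_le_millsRatio w)
  have hupper : millsRatio w * (1 + w ^ 2) ≤ w + 2 / (w ^ 3 + 3 * w + 1) :=
    (le_div_iff₀ hpos).1 (millsRatio_le_of_cubic_pos (by positivity))
  have hdenom : 2 / (w ^ 3 + 3 * w + 1) ≤ 2 / (1 + w ^ 3) :=
    div_le_div_of_nonneg_left zero_le_two (by positivity) (by linarith)
  rw [hmills]
  constructor <;> linarith
end
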